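/- (Theorem 3.3, main result for the convex case.) For every nonempty bounded open convex set Ω ⊆ ℝ², the scale-invariant functional F(Ω) := |Ω|²·λ₁(Ω)·μ₁(Ω) satisfies the sharp two-sided bound π⁴/4 < F(Ω) < 9π²·λ₁(𝔻), where 𝔻 is the open unit disc (so that λ₁(𝔻) = j₀₁²). -/

import Mathlib

open MeasureTheory Filter Set Real RealInnerProductSpace

noncomputable section

abbrev E2 : Type := EuclideanSpace ℝ (Fin 2)

/-- First Dirichlet eigenvalue, variational characterization. -/
noncomputable def dEig1 (Ω : Set E2) : ℝ :=
  sInf { R : ℝ | ∃ u : E2 → ℝ, ContDiff ℝ (⊤ : ℕ∞) u ∧ HasCompactSupport u ∧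
    tsupport u ⊆ Ω ∧ (∫ x, (u x)^2) ≠ 0 ∧
    R = (∫ x, ‖fderiv ℝ u x‖^2) / (∫ x, (u x)^2) }

/-- First nontrivial Neumann eigenvalue, variational characterization. -/
noncomputable def nEig1 (Ω : Set E2) : ℝ :=
  sInf { R : ℝ | ∃ u : E2 → ℝ, ContDiff ℝ (⊤ : ℕ∞) u ∧ (∫ x in Ω, u x) = 0 ∧
    (∫ x in Ω, (u x)^2) ≠ 0 ∧
    R = (∫ x in Ω, ‖fderiv ℝ u x‖^2) / (∫ x in Ω, (u x)^2) }

/-- The open unit disc in the plane. -/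
def unitDisc : Set E2 := Metric.ball 0 1

set_option linter.all false

/-- rotation by a right angle -/
def rot (e : E2) : E2 := !₂[-(e 1), e 0]

lemma inner_two (x y : E2) : ⟪x, y⟫ = x 0 * y 0 + x 1 * y 1 := by
  simp [PiLp.inner_apply, Fin.sum_univ_two]; ring

lemma normsq_two (x : E2) : ‖x‖ ^ 2 = x 0 ^ 2 + x 1 ^ 2 := by
  rw [← real_inner_self_eq_norm_sq, inner_two]; ring

lemma rot_zero (e : E2) : rot e 0 = -(e 1) := by simp [rot]
lemma rot_one (e : E2) : rot e 1 = e 0 := by simp [rot]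

lemma norm_rot (e : E2) : ‖rot e‖ = ‖e‖ := by
  have : ‖rot e‖ ^ 2 = ‖e‖ ^ 2 := by rw [normsq_two, normsq_two, rot_zero, rot_one]; ring
  exact (pow_left_inj₀ (norm_nonneg _) (norm_nonneg _) two_ne_zero).1 this

lemma inner_rot (e : E2) : ⟪rot e, e⟫ = 0 := by
  rw [inner_two, rot_zero, rot_one]; ring

/-- Orthonormal coordinates attached to a unit vector. -/
def Phi (e : E2) (q : ℝ × ℝ) : E2 := q.1 • rot e + q.2 • e

lemma continuous_Phi (e : E2) : Continuous (Phi e) := by unfold Phi; fun_prop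

lemma inner_Phi_e {e : E2} (he : ‖e‖ = 1) (q : ℝ × ℝ) : ⟪Phi e q, e⟫ = q.2 := by
  simp [Phi, inner_add_left, inner_smul_left, inner_rot, real_inner_self_eq_norm_sq, he]

lemma inner_Phi_rot {e : E2} (he : ‖e‖ = 1) (q : ℝ × ℝ) : ⟪Phi e q, rot e⟫ = q.1 := by
  have : ⟪e, rot e⟫ = 0 := by rw [real_inner_comm, inner_rot]
  simp [Phi, inner_add_left, inner_smul_left, this, real_inner_self_eq_norm_sq, he, norm_rot]

lemma Phi_inner {e : E2} (he : ‖e‖ = 1) (x : E2) : Phi e (⟪x, rot e⟫, ⟪x, e⟫) = x := by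
  have h1 : e 0 ^ 2 + e 1 ^ 2 = 1 := by rw [← normsq_two, he]; norm_num
  ext i
  fin_cases i
  · simp [Phi, inner_two, rot_zero, rot_one]
    linear_combination (x 0) * h1
  · simp [Phi, inner_two, rot_zero, rot_one]
    linear_combination (x 1) * h1

lemma norm_Phi_sq {e : E2} (he : ‖e‖ = 1) (q : ℝ × ℝ) : ‖Phi e q‖ ^ 2 = q.1 ^ 2 + q.2 ^ 2 := by
  have h1 : e 0 ^ 2 + e 1 ^ 2 = 1 := by rw [← normsq_two, he]; norm_num
  rw [normsq_two]
  simp [Phi, rot_zero, rot_one]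
  linear_combination (q.1 ^ 2 + q.2 ^ 2) * h1

lemma normsq_coord {e : E2} (he : ‖e‖ = 1) (x : E2) : ‖x‖ ^ 2 = ⟪x, rot e⟫ ^ 2 + ⟪x, e⟫ ^ 2 := by
  conv_lhs => rw [← Phi_inner he x]
  rw [norm_Phi_sq he]

def obasis {e : E2} (he : ‖e‖ = 1) : OrthonormalBasis (Fin 2) ℝ E2 :=
  OrthonormalBasis.mk (v := ![rot e, e]) (by
    rw [orthonormal_iff_ite]
    intro i j
    have h2 : ⟪e, rot e⟫ = 0 := by rw [real_inner_comm, inner_rot]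
    fin_cases i <;> fin_cases j <;>
      simp [inner_rot, h2, real_inner_self_eq_norm_sq, norm_rot, he]) (by
    intro x _
    rw [← Phi_inner he x]
    refine Submodule.add_mem _ (Submodule.smul_mem _ _ ?_) (Submodule.smul_mem _ _ ?_)
    · exact Submodule.subset_span ⟨0, rfl⟩
    · exact Submodule.subset_span ⟨1, rfl⟩)

lemma mp_Phi {e : E2} (he : ‖e‖ = 1) : MeasurePreserving (Phi e) volume volume := by
  have h1 := (obasis he).measurePreserving_repr_symm
  have h2 := (EuclideanSpace.volume_preserving_symm_measurableEquiv_toLp (Fin 2)).symm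
  have h3 := (volume_preserving_finTwoArrow ℝ).symm
  have h4 := h1.comp (h2.comp h3)
  convert h4 using 1
  ext q i
  simp [Phi, obasis, ← OrthonormalBasis.sum_repr_symm, Fin.sum_univ_two, MeasurableEquiv.finTwoArrow]

lemma me_Phi {e : E2} (he : ‖e‖ = 1) : MeasurableEmbedding (Phi e) := by
  refine Continuous.measurableEmbedding (continuous_Phi e) ?_
  intro q q' h
  have h1 := inner_Phi_rot he q
  have h2 := inner_Phi_e he q
  rw [h, inner_Phi_rot he] at h1
  rw [h, inner_Phi_e he] at h2
  exact Prod.ext h1.symm h2.symm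

/-- affine version -/
lemma mp_Psi {e : E2} (he : ‖e‖ = 1) (p : E2) :
    MeasurePreserving (fun q => p + Phi e q) volume volume :=
  (measurePreserving_add_left volume p).comp (mp_Phi he)

lemma me_Psi {e : E2} (he : ‖e‖ = 1) (p : E2) : MeasurableEmbedding (fun q => p + Phi e q) :=
  (measurableEmbedding_addLeft p).comp (me_Phi he)

lemma integral_coord {e : E2} (he : ‖e‖ = 1) (p : E2) (F : E2 → ℝ) :
    ∫ x, F x = ∫ q : ℝ × ℝ, F (p + Phi e q) :=
  ((mp_Psi he p).integral_comp (me_Psi he p) F).symm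

lemma integrable_coord {e : E2} (he : ‖e‖ = 1) (p : E2) {F : E2 → ℝ} (hF : Integrable F) :
    Integrable (fun q : ℝ × ℝ => F (p + Phi e q)) :=
  ((mp_Psi he p).integrable_comp_emb (me_Psi he p)).2 hF

lemma Psi_inner {e : E2} (he : ‖e‖ = 1) (p x : E2) :
    p + Phi e (⟪x - p, rot e⟫, ⟪x - p, e⟫) = x := by
  rw [Phi_inner he]; abel

/-- support property at a touching point -/
lemma touching_support {Ω : Set E2} (hopen : IsOpen Ω) (hconv : Convex ℝ Ω) {p e : E2} {r : ℝ}
    (hr : 0 < r) (he : ‖e‖ = 1) (hball : Metric.ball p r ⊆ Ω) (hnot : p + r • e ∉ Ω) :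
    ∀ x ∈ Ω, ⟪x - p, e⟫ < r := by
  obtain ⟨f, hf⟩ := geometric_hahn_banach_open_point hconv hopen hnot
  set g : E2 := (InnerProductSpace.toDual ℝ E2).symm f with hg
  have hfg : ∀ x, f x = ⟪g, x⟫ := by
    intro x; simp [hg]
  have hgne : g ≠ 0 := by
    intro h0
    have := hf p (hball (Metric.mem_ball_self hr))
    simp [hfg, h0] at this
  have hgpos : 0 < ‖g‖ := norm_pos_iff.2 hgne
  -- norm g ≤ inner g e
  have key : ‖g‖ ≤ ⟪g, e⟫ := by
    by_contra hlt
    push Not at hlt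
    -- choose t<1 with inner g e < t * norm g
    obtain ⟨t, ht1, ht2⟩ := exists_between (max_lt (one_pos) ((div_lt_one hgpos).2 hlt))
    have ht0 : 0 < t := lt_of_le_of_lt (le_max_left _ _) ht1
    have ht3 : ⟪g, e⟫ < t * ‖g‖ := by
      have := lt_of_le_of_lt (le_max_right _ _) ht1
      rwa [div_lt_iff₀ hgpos] at this
    have hx : p + (r * t / ‖g‖) • g ∈ Ω := by
      apply hball
      rw [Metric.mem_ball, dist_eq_norm, add_sub_cancel_left, norm_smul, Real.norm_eq_abs,
        abs_of_pos (by positivity)]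
      rw [div_mul_cancel₀ _ hgpos.ne']
      nlinarith
    have h1 := hf _ hx
    rw [hfg, hfg, inner_add_right, inner_add_right, inner_smul_right, inner_smul_right,
      real_inner_self_eq_norm_sq] at h1
    have h2 : r * t / ‖g‖ * ‖g‖ ^ 2 = r * (t * ‖g‖) := by field_simp
    rw [h2] at h1
    nlinarith
  have heq : g = ‖g‖ • e := by
    have h1 : ‖g - ‖g‖ • e‖ ^ 2 ≤ 0 := by
      rw [norm_sub_sq_real, inner_smul_right, norm_smul, he]
      simp
      nlinarith
    have h2 : ‖g - ‖g‖ • e‖ = 0 := by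
      have := norm_nonneg (g - ‖g‖ • e)
      nlinarith
    exact sub_eq_zero.1 (norm_eq_zero.1 h2)
  intro x hx
  have h1 := hf x hx
  rw [hfg, hfg, heq, inner_smul_left, inner_smul_left] at h1
  simp at h1
  have h2 : ⟪e, x⟫ < ⟪e, p + r • e⟫ := lt_of_mul_lt_mul_left h1 hgpos.le
  rw [inner_add_right, inner_smul_right, real_inner_self_eq_norm_sq, he] at h2
  rw [inner_sub_left, real_inner_comm, real_inner_comm e p]
  linarith

/-- Caratheodory with exactly three points in the plane -/
lemma carath3 {A : Set E2} {x : E2} (hx : x ∈ convexHull ℝ A) :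
    ∃ (w : Fin 3 → ℝ) (z : Fin 3 → E2), (∀ i, 0 ≤ w i) ∧ ∑ i, w i = 1 ∧ (∀ i, z i ∈ A) ∧
      ∑ i, w i • z i = x := by
  obtain ⟨ι, hι, z, w, hz, haff, hw, hsum, hx⟩ := eq_pos_convex_span_of_mem_convexHull hx
  have hcard : Fintype.card ι ≤ 3 := by
    have h1 := haff.card_le_finrank_succ
    have h2 : Module.finrank ℝ (vectorSpan ℝ (Set.range z)) ≤ 2 := by
      have := Submodule.finrank_le (vectorSpan ℝ (Set.range z))
      simpa using this
    omega
  have hne : Nonempty ι := by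
    by_contra h
    rw [not_nonempty_iff] at h
    simp at hsum
  obtain ⟨i0⟩ := hne
  obtain ⟨g⟩ : Nonempty (ι ↪ Fin 3) := by
    apply Function.Embedding.nonempty_of_card_le; simpa using hcard
  classical
  refine ⟨fun k => ∑ i, if g i = k then w i else 0,
    fun k => if h : ∃ i, g i = k then z h.choose else z i0, ?_, ?_, ?_, ?_⟩
  · intro k
    exact Finset.sum_nonneg fun i _ => by split_ifs <;> [exact (hw i).le; exact le_rfl]
  · rw [Finset.sum_comm]; simpa using hsum
  · intro k
    dsimp only
    split_ifs with h
    · exact hz ⟨_, rfl⟩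
    · exact hz ⟨_, rfl⟩
  · rw [← hx]
    simp only [Finset.sum_smul]
    rw [Finset.sum_comm]
    refine Finset.sum_congr rfl fun i _ => ?_
    rw [Finset.sum_eq_single (g i)]
    · have h : ∃ j, g j = g i := ⟨i, rfl⟩
      rw [dif_pos h, if_pos rfl, g.injective h.choose_spec]
    · intro b _ hb; rw [if_neg (Ne.symm hb), zero_smul]
    · simp

lemma compact_hull {A : Set E2} (hA : IsCompact A) : IsCompact (convexHull ℝ A) := by
  have h1 : IsCompact ((stdSimplex ℝ (Fin 3)) ×ˢ (Set.pi Set.univ (fun _ : Fin 3 => A))) :=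
    (isCompact_stdSimplex ℝ (Fin 3)).prod (isCompact_univ_pi fun _ => hA)
  have h2 := h1.image (f := fun q : (Fin 3 → ℝ) × (Fin 3 → E2) => ∑ i, q.1 i • q.2 i)
    (by fun_prop)
  convert h2
  ext x
  constructor
  · intro hx
    obtain ⟨w, z, hw, hs, hz, hx⟩ := carath3 hx
    exact ⟨(w, z), ⟨⟨hw, hs⟩, fun i _ => hz i⟩, hx⟩
  · rintro ⟨⟨w, z⟩, ⟨⟨hw, hs⟩, hz⟩, rfl⟩
    exact (convex_convexHull ℝ A).sum_mem (fun i _ => hw i) hs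
      (fun i _ => subset_convexHull ℝ A (hz i trivial))

/-- incircle: a maximal inscribed disc touches in directions whose hull contains the origin. -/
lemma incircle {Ω : Set E2} (hne : Ω.Nonempty) (hopen : IsOpen Ω)
    (hbd : Bornology.IsBounded Ω) (hconv : Convex ℝ Ω) :
    ∃ (p : E2) (r : ℝ) (A : Set E2), 0 < r ∧ Metric.ball p r ⊆ Ω ∧
      (∀ e ∈ A, ‖e‖ = 1) ∧ (∀ e ∈ A, ∀ x ∈ Ω, ⟪x - p, e⟫ < r) ∧ (0 : E2) ∈ convexHull ℝ A := by
  have hcne : (Ωᶜ).Nonempty := by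
    by_contra h
    rw [not_nonempty_iff_eq_empty, compl_empty_iff] at h
    rw [h] at hbd
    exact NormedSpace.unbounded_univ ℝ E2 hbd
  have hcl : IsClosed Ωᶜ := hopen.isClosed_compl
  have hcomp : IsCompact (closure Ω) := hbd.isCompact_closure
  obtain ⟨p, hpcl, hpmax⟩ := hcomp.exists_isMaxOn (hne.mono subset_closure)
    (f := fun x => Metric.infDist x Ωᶜ) (Metric.continuous_infDist_pt _).continuousOn
  set r := Metric.infDist p Ωᶜ with hrdef
  have hrpos : 0 < r := by
    obtain ⟨x, hx⟩ := hne
    have h1 : Metric.infDist x Ωᶜ ≤ r := hpmax (subset_closure hx)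
    have h2 : 0 < Metric.infDist x Ωᶜ := (hcl.notMem_iff_infDist_pos hcne).1 (by simpa using hx)
    linarith
  have hball : Metric.ball p r ⊆ Ω := by
    intro x hx
    by_contra hxn
    have h1 : r ≤ dist p x := Metric.infDist_le_dist_of_mem hxn
    rw [Metric.mem_ball, dist_comm] at hx
    linarith
  set A : Set E2 := {e | ‖e‖ = 1 ∧ p + r • e ∉ Ω} with hA
  refine ⟨p, r, A, hrpos, hball, fun e he => he.1,
    fun e he => touching_support hopen hconv hrpos he.1 hball he.2, ?_⟩
  have hAcl : IsClosed A := by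
    have : A = (Metric.sphere (0:E2) 1) ∩ (fun e => p + r • e) ⁻¹' Ωᶜ := by
      ext e; simp [hA]
    rw [this]
    exact Metric.isClosed_sphere.inter (hcl.preimage (by fun_prop))
  have hAcomp : IsCompact A := by
    apply (isCompact_sphere (0:E2) 1).of_isClosed_subset hAcl
    intro e he; simpa using he.1
  by_contra h0
  have hcc : IsCompact (convexHull ℝ A) := compact_hull hAcomp
  obtain ⟨f, s, hs0, hs⟩ := geometric_hahn_banach_point_closed (convex_convexHull ℝ A) hcc.isClosed h0
  simp at hs0
  set d : E2 := (InnerProductSpace.toDual ℝ E2).symm f with hd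
  have hfd : ∀ x, f x = ⟪d, x⟫ := by
    intro x; simp [hd]
  -- sequences
  have hclaim : ∀ n : ℕ, ∃ x, x ∉ Ω ∧ ‖x - (p - (1 / ((n:ℝ) + 1)) • d)‖ ≤ r := by
    intro n
    set q := p - (1 / ((n:ℝ) + 1)) • d with hq
    obtain ⟨y, hy, hyd⟩ := hcl.exists_infDist_eq_dist hcne q
    refine ⟨y, hy, ?_⟩
    rw [← dist_eq_norm, dist_comm, ← hyd]
    by_cases hqc : q ∈ closure Ω
    · exact hpmax hqc
    · have : q ∈ Ωᶜ := fun h => hqc (subset_closure h)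
      rw [Metric.infDist_zero_of_mem this]; exact hrpos.le
  choose x hxn hxr using hclaim
  have hη : Tendsto (fun n : ℕ => 1 / ((n:ℝ) + 1)) atTop (nhds 0) := tendsto_one_div_add_atTop_nhds_zero_nat
  have hqlim : Tendsto (fun n : ℕ => p - (1 / ((n:ℝ) + 1)) • d) atTop (nhds p) := by
    have := (tendsto_const_nhds (x := p)).sub (hη.smul_const d)
    simpa using this
  have hxb : ∀ n, x n ∈ Metric.closedBall p (r + ‖d‖) := by
    intro n
    rw [Metric.mem_closedBall, dist_eq_norm]
    have h1 : x n - p = (x n - (p - (1 / ((n:ℝ) + 1)) • d)) - (1 / ((n:ℝ) + 1)) • d := by abel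
    have h2 : ‖(1 / ((n:ℝ) + 1)) • d‖ ≤ ‖d‖ := by
      rw [norm_smul, Real.norm_eq_abs, abs_of_pos (by positivity)]
      have : 1 / ((n:ℝ) + 1) ≤ 1 := by
        rw [div_le_one (by positivity)]; have := Nat.cast_nonneg (α := ℝ) n; linarith
      nlinarith [norm_nonneg d]
    rw [h1]
    exact (norm_sub_le _ _).trans (add_le_add (hxr n) h2)
  obtain ⟨z, -, φ, hφ, hz⟩ := (isCompact_closedBall p (r + ‖d‖)).tendsto_subseq hxb
  have hzn : z ∈ Ωᶜ := hcl.mem_of_tendsto hz (Eventually.of_forall fun n => hxn _)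
  have hzr : ‖z - p‖ ≤ r := by
    have h1 := ((hz.sub (hqlim.comp hφ.tendsto_atTop)).norm)
    exact le_of_tendsto h1 (Eventually.of_forall fun n => hxr _)
  have hzr2 : ‖z - p‖ = r := by
    apply le_antisymm hzr
    have : r ≤ dist p z := Metric.infDist_le_dist_of_mem hzn
    rwa [dist_comm, dist_eq_norm] at this
  have heA : (1 / r) • (z - p) ∈ A := by
    refine ⟨?_, ?_⟩
    · rw [norm_smul, hzr2, Real.norm_eq_abs, abs_of_pos (by positivity)]; field_simp
    · rw [smul_smul, mul_one_div_cancel hrpos.ne', one_smul]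
      simpa using hzn
  have hspos := hs _ (subset_convexHull ℝ A heA)
  have hdz : 0 < ⟪d, z - p⟫ := by
    rw [hfd, inner_smul_right] at hspos
    have : 0 < 1 / r * ⟪d, z - p⟫ := by linarith
    exact (pos_iff_pos_of_mul_pos this).1 (by positivity)
  have hlim : Tendsto (fun n => ⟪d, x (φ n) - p⟫) atTop (nhds ⟪d, z - p⟫) := by
    have hc : Continuous (fun y : E2 => ⟪d, y - p⟫) := by fun_prop
    exact (hc.tendsto z).comp hz
  obtain ⟨n, hn⟩ := (hlim.eventually (lt_mem_nhds hdz)).exists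
  apply hxn (φ n)
  apply hball
  rw [Metric.mem_ball, dist_eq_norm]
  set η := 1 / (((φ n : ℕ):ℝ) + 1) with hηdef
  have hηpos : 0 < η := by positivity
  have h1 := hxr (φ n)
  have h2 : x (φ n) - (p - η • d) = (x (φ n) - p) + η • d := by abel
  rw [← hηdef, h2] at h1
  have h3 : ‖(x (φ n) - p) + η • d‖ ^ 2 ≤ r ^ 2 := by gcongr
  rw [norm_add_sq_real, inner_smul_right, real_inner_comm] at h3
  have h4 : ‖x (φ n) - p‖ ^ 2 < r ^ 2 := by
    nlinarith [sq_nonneg ‖η • d‖, mul_pos hηpos hn]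
  exact lt_of_pow_lt_pow_left₀ 2 hrpos.le h4

/-- three-point version -/
lemma incircle3 {Ω : Set E2} (hne : Ω.Nonempty) (hopen : IsOpen Ω)
    (hbd : Bornology.IsBounded Ω) (hconv : Convex ℝ Ω) :
    ∃ (p : E2) (r : ℝ) (w : Fin 3 → ℝ) (e : Fin 3 → E2), 0 < r ∧ Metric.ball p r ⊆ Ω ∧
      (∀ i, ‖e i‖ = 1) ∧ (∀ i, ∀ x ∈ Ω, ⟪x - p, e i⟫ < r) ∧ (∀ i, 0 ≤ w i) ∧ ∑ i, w i = 1 ∧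
      ∑ i, w i • e i = 0 := by
  obtain ⟨p, r, A, hr, hb, h1, h2, h3⟩ := incircle hne hopen hbd hconv
  obtain ⟨w, z, hw, hs, hz, hx⟩ := carath3 h3
  exact ⟨p, r, w, z, hr, hb, fun i => h1 _ (hz i), fun i => h2 _ (hz i), hw, hs, hx⟩

lemma hp1d {v v' : ℝ → ℝ} (hv : ∀ y, HasDerivAt v (v' y) y) (hv'c : Continuous v') {r k : ℝ}
    (hv0 : ∀ y, r ≤ y → v y = 0) (hk0 : 0 < k) (hkr : k * r < π / 2) {Y : Set ℝ}
    (hY0 : ∀ y ∈ Y, 0 ≤ y) (hYup : ∀ y ∈ Y, ∀ t, 0 ≤ t → y + t ∈ Y) :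
    k ^ 2 * ∫ y in Y, v y ^ 2 ≤ ∫ y in Y, v' y ^ 2 := by
  rcases Y.eq_empty_or_nonempty with h | hne
  · simp [h]
  set a := sInf Y with ha
  have hbdd : BddBelow Y := ⟨0, fun y hy => hY0 y hy⟩
  have ha0 : 0 ≤ a := le_csInf hne hY0
  have h1 : Ioi a ⊆ Y := by
    intro y hy
    obtain ⟨z, hz, hzy⟩ := exists_lt_of_csInf_lt hne hy
    have := hYup z hz (y - z) (by linarith)
    simpa using this
  have h2 : Y ⊆ Ici a := fun y hy => csInf_le hbdd hy
  have hae : Y =ᵐ[volume] Ioi a := by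
    apply HasSubset.Subset.eventuallyLE h2 |>.trans_eq Ioi_ae_eq_Ici.symm |>.antisymm
    exact HasSubset.Subset.eventuallyLE h1
  rw [setIntegral_congr_set hae, setIntegral_congr_set hae]
  have hvc : Continuous v := continuous_iff_continuousAt.2 fun y => (hv y).continuousAt
  by_cases har : r ≤ a
  · have : ∫ y in Ioi a, v y ^ 2 = 0 := by
      apply setIntegral_eq_zero_of_forall_eq_zero
      intro y hy
      rw [hv0 y (har.trans (le_of_lt hy))]; ring
    rw [this, mul_zero]
    exact integral_nonneg fun y => sq_nonneg _
  · push Not at har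
    have hv'0 : ∀ y, r < y → v' y = 0 := by
      intro y hy
      have : HasDerivAt v 0 y := by
        apply (hasDerivAt_const y (0:ℝ)).congr_of_eventuallyEq
        filter_upwards [lt_mem_nhds hy] with z hz
        exact hv0 z hz.le
      exact (hv y).unique this
    have e1 : ∫ y in Ioi a, v y ^ 2 = ∫ y in a..r, v y ^ 2 := by
      rw [intervalIntegral.integral_of_le har.le]
      apply setIntegral_eq_of_subset_of_forall_diff_eq_zero measurableSet_Ioi Ioc_subset_Ioi_self
      rintro y ⟨hy1, hy2⟩
      have : r < y := by
        by_contra h; exact hy2 ⟨hy1, not_lt.1 h⟩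
      rw [hv0 y this.le]; ring
    have e2 : ∫ y in Ioi a, v' y ^ 2 = ∫ y in a..r, v' y ^ 2 := by
      rw [intervalIntegral.integral_of_le har.le]
      apply setIntegral_eq_of_subset_of_forall_diff_eq_zero measurableSet_Ioi Ioc_subset_Ioi_self
      rintro y ⟨hy1, hy2⟩
      have : r < y := by
        by_contra h; exact hy2 ⟨hy1, not_lt.1 h⟩
      rw [hv'0 y this]; ring
    rw [e1, e2]
    have hcos : ∀ y ∈ Icc a r, 0 < cos (k * y) := by
      intro y hy
      apply cos_pos_of_mem_Ioo
      constructor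
      · have : 0 ≤ k * y := mul_nonneg hk0.le (ha0.trans hy.1)
        linarith [pi_pos]
      · exact lt_of_le_of_lt (mul_le_mul_of_nonneg_left hy.2 hk0.le) hkr
    have hder : ∀ y ∈ Icc a r, HasDerivAt (fun y => -k * tan (k * y) * v y ^ 2)
        (-k * (1 / cos (k * y) ^ 2 * k) * v y ^ 2 + -k * tan (k * y) * (2 * v y * v' y)) y := by
      intro y hy
      have h1 : HasDerivAt (fun y => k * y) k y := by simpa using (hasDerivAt_id y).const_mul k
      have h2 := (Real.hasDerivAt_tan (hcos y hy).ne').comp y h1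
      have h3 := (h2.const_mul (-k)).mul ((hv y).pow 2)
      refine HasDerivAt.congr_deriv h3 ?_
      simp only [Pi.pow_apply, Function.comp]
      norm_num
    have key := intervalIntegral.sub_le_integral_of_hasDeriv_right_of_le har.le
      (g := fun y => -k * tan (k * y) * v y ^ 2) (φ := fun y => v' y ^ 2 - k ^ 2 * v y ^ 2)
      (fun y hy => (hder y hy).continuousAt.continuousWithinAt)
      (fun y hy => (hder y (Ioo_subset_Icc_self hy)).hasDerivWithinAt)
      ((by fun_prop : Continuous fun y => v' y ^ 2 - k ^ 2 * v y ^ 2).continuousOn.integrableOn_Icc)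
      (by
        intro y hy
        have hc := hcos y (Ioo_subset_Icc_self hy)
        have ht : 1 / cos (k * y) ^ 2 = 1 + tan (k * y) ^ 2 := by
          rw [tan_eq_sin_div_cos]
          field_simp
          rw [add_comm, sin_sq_add_cos_sq]
        rw [ht]
        nlinarith [sq_nonneg (v' y + k * tan (k * y) * v y)])
    have i1 : IntervalIntegrable (fun y => v' y ^ 2) volume a r :=
      (by fun_prop : Continuous fun y => v' y ^ 2).intervalIntegrable _ _
    have i2 : IntervalIntegrable (fun y => k ^ 2 * v y ^ 2) volume a r :=
      (by fun_prop : Continuous fun y => k ^ 2 * v y ^ 2).intervalIntegrable _ _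
    rw [intervalIntegral.integral_sub i1 i2, intervalIntegral.integral_const_mul] at key
    have htan : 0 ≤ tan (k * a) :=
      tan_nonneg_of_nonneg_of_le_pi_div_two (mul_nonneg hk0.le ha0)
        ((mul_le_mul_of_nonneg_left har.le hk0.le).trans hkr.le)
    rw [hv0 r le_rfl] at key
    have h5 : 0 ≤ k * tan (k * a) * v a ^ 2 := by positivity
    linarith

lemma hp_region {u : E2 → ℝ} (hu : ContDiff ℝ 1 u) (hcs : HasCompactSupport u) {p e : E2}
    (he : ‖e‖ = 1) {r k : ℝ} (hu0 : ∀ x, r ≤ ⟪x - p, e⟫ → u x = 0) (hk0 : 0 < k)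
    (hkr : k * r < π / 2) {C : Set E2} (hC : MeasurableSet C) (hC0 : ∀ x ∈ C, 0 ≤ ⟪x - p, e⟫)
    (hCup : ∀ x ∈ C, ∀ t : ℝ, 0 ≤ t → x + t • e ∈ C) :
    k ^ 2 * ∫ x in C, u x ^ 2 ≤ ∫ x in C, ‖fderiv ℝ u x‖ ^ 2 := by
  have hdc : Continuous (fderiv ℝ u) := hu.continuous_fderiv (by norm_num)
  have hucs2 : HasCompactSupport (fun x => u x ^ 2) := by
    apply hcs.comp_left (g := fun t : ℝ => t ^ 2); norm_num
  have hdcs : HasCompactSupport (fderiv ℝ u) := hcs.fderiv ℝ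
  have hdcs2 : HasCompactSupport (fun x => ‖fderiv ℝ u x‖ ^ 2) := by
    apply hdcs.comp_left (g := fun t : E2 →L[ℝ] ℝ => ‖t‖ ^ 2); norm_num
  have hdcs3 : HasCompactSupport (fun x => (fderiv ℝ u x e) ^ 2) := by
    apply hdcs.comp_left (g := fun t : E2 →L[ℝ] ℝ => (t e) ^ 2); norm_num
  have iu : Integrable (fun x => u x ^ 2) := (hu.continuous.pow 2).integrable_of_hasCompactSupport hucs2
  have id2 : Integrable (fun x => ‖fderiv ℝ u x‖ ^ 2) :=
    (hdc.norm.pow 2).integrable_of_hasCompactSupport hdcs2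
  have id3 : Integrable (fun x => (fderiv ℝ u x e) ^ 2) :=
    (by fun_prop : Continuous fun x => (fderiv ℝ u x e) ^ 2).integrable_of_hasCompactSupport hdcs3
  have step1 : ∫ x in C, (fderiv ℝ u x e) ^ 2 ≤ ∫ x in C, ‖fderiv ℝ u x‖ ^ 2 := by
    apply integral_mono id3.integrableOn id2.integrableOn
    intro x
    have := (fderiv ℝ u x).le_opNorm e
    rw [he, mul_one, Real.norm_eq_abs] at this
    exact sq_le_sq' (neg_le_of_abs_le this) (le_of_abs_le this)
  refine le_trans ?_ step1
  rw [← integral_indicator hC, ← integral_indicator hC]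
  have j1 := iu.indicator hC
  have j2 := id3.indicator hC
  rw [integral_coord he p, integral_coord he p]
  have k1 := integrable_coord he p j1
  have k2 := integrable_coord he p j2
  rw [Measure.volume_eq_prod] at k1 k2 ⊢
  rw [integral_prod _ k1, integral_prod _ k2, ← integral_const_mul]
  apply integral_mono (k1.integral_prod_left.const_mul _) k2.integral_prod_left
  intro s
  dsimp only
  set Y : Set ℝ := {y | p + Phi e (s, y) ∈ C} with hY
  have hline : ∀ y, HasDerivAt (fun y => p + Phi e (s, y)) e y := by
    intro y
    have h1 : HasDerivAt (fun y : ℝ => y • e) ((1:ℝ) • e) y := (hasDerivAt_id y).smul_const e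
    rw [one_smul] at h1
    have := (h1.const_add (s • rot e)).const_add p
    exact this
  have hYm : MeasurableSet Y :=
    hC.preimage ((by unfold Phi; fun_prop : Continuous fun y : ℝ => p + Phi e (s, y)).measurable)
  have q1 : ∀ F : E2 → ℝ, ∫ y, C.indicator F (p + Phi e (s, y)) = ∫ y in Y, F (p + Phi e (s, y)) := by
    intro F
    rw [← integral_indicator hYm]
    rfl
  rw [q1, q1]
  apply hp1d (v := fun y => u (p + Phi e (s, y))) (v' := fun y => fderiv ℝ u (p + Phi e (s, y)) e)
    (r := r) _ _ _ hk0 hkr _ _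
  · intro y
    exact ((hu.differentiable (by norm_num)) _).hasFDerivAt.comp_hasDerivAt y (hline y)
  · have : Continuous fun y : ℝ => p + Phi e (s, y) := by unfold Phi; fun_prop
    fun_prop
  · intro y hy
    apply hu0
    rw [add_sub_cancel_left, inner_Phi_e he]
    exact hy
  · intro y hy
    have := hC0 _ hy
    rwa [add_sub_cancel_left, inner_Phi_e he] at this
  · intro y hy t ht
    have := hCup _ hy t ht
    show p + Phi e (s, y + t) ∈ C
    convert this using 1
    simp only [Phi, add_smul]; abel

lemma null_line {g : E2} (hg : g ≠ 0) (p : E2) : volume {x : E2 | ⟪x - p, g⟫ = 0} = 0 := by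
  have h0 : volume {x : E2 | ⟪x, g⟫ = 0} = 0 := by
    have := Measure.addHaar_submodule (volume : Measure E2) (LinearMap.ker (innerSL ℝ g : E2 →L[ℝ] ℝ).toLinearMap) (by
      intro h
      have : g ∈ LinearMap.ker (innerSL ℝ g : E2 →L[ℝ] ℝ).toLinearMap := by rw [h]; trivial
      simp at this
      exact hg this)
    convert this using 2
    ext x
    simp [real_inner_comm]
  have : {x : E2 | ⟪x - p, g⟫ = 0} = (fun x => x - p) ⁻¹' {x : E2 | ⟪x, g⟫ = 0} := rfl
  rw [this]
  rw [(measurePreserving_sub_right volume p).measure_preimage]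
  · exact h0
  · exact (measurableSet_eq_fun (by fun_prop) (by fun_prop)).nullMeasurableSet

lemma hp_test {u : E2 → ℝ} (hu : ContDiff ℝ 1 u) (hcs : HasCompactSupport u) {p : E2}
    {A : Finset E2} (hA : ∀ e ∈ A, ‖e‖ = 1) {w : E2 → ℝ} (hw : ∀ e ∈ A, 0 ≤ w e)
    (hws : ∑ e ∈ A, w e = 1) (hw0 : ∑ e ∈ A, w e • e = 0) {r k : ℝ}
    (hu0 : ∀ e ∈ A, ∀ x, r ≤ ⟪x - p, e⟫ → u x = 0) (hk0 : 0 < k)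
    (hkr : k * r < π / 2) :
    k ^ 2 * ∫ x, u x ^ 2 ≤ ∫ x, ‖fderiv ℝ u x‖ ^ 2 := by
  have hdc : Continuous (fderiv ℝ u) := hu.continuous_fderiv (by norm_num)
  have hucs2 : HasCompactSupport (fun x => u x ^ 2) := by
    apply hcs.comp_left (g := fun t : ℝ => t ^ 2); norm_num
  have hdcs : HasCompactSupport (fderiv ℝ u) := hcs.fderiv ℝ
  have hdcs2 : HasCompactSupport (fun x => ‖fderiv ℝ u x‖ ^ 2) := by
    apply hdcs.comp_left (g := fun t : E2 →L[ℝ] ℝ => ‖t‖ ^ 2); norm_num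
  have iu : Integrable (fun x => u x ^ 2) := (hu.continuous.pow 2).integrable_of_hasCompactSupport hucs2
  have id2 : Integrable (fun x => ‖fderiv ℝ u x‖ ^ 2) :=
    (hdc.norm.pow 2).integrable_of_hasCompactSupport hdcs2
  set C : E2 → Set E2 := fun e => ⋂ e' ∈ A.filter (· ≠ e), {x | ⟪x - p, e'⟫ < ⟪x - p, e⟫} with hCdef
  have hCmem : ∀ e x, x ∈ C e ↔ ∀ e' ∈ A, e' ≠ e → ⟪x - p, e'⟫ < ⟪x - p, e⟫ := by
    intro e x; simp [hCdef]
  have hCm : ∀ e, MeasurableSet (C e) := by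
    intro e
    apply Finset.measurableSet_biInter
    intro e' _
    exact measurableSet_lt (by fun_prop) (by fun_prop)
  have hdisj : Set.PairwiseDisjoint (↑A) C := by
    intro e he e' he' hne
    rw [Function.onFun, Set.disjoint_left]
    intro x hx hx'
    have h1 := (hCmem e x).1 hx e' he' hne.symm
    have h2 := (hCmem e' x).1 hx' e he hne
    linarith
  have hAne : A.Nonempty := by
    by_contra h
    rw [Finset.not_nonempty_iff_eq_empty] at h
    simp [h] at hws
  have hcover : volume (⋃ e ∈ A, C e)ᶜ = 0 := by
    have hsub : (⋃ e ∈ A, C e)ᶜ ⊆ ⋃ q ∈ (A ×ˢ A).filter (fun q => q.1 ≠ q.2), {x | ⟪x - p, q.1 - q.2⟫ = 0} := by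
      intro x hx
      obtain ⟨e, he, hmax⟩ := A.exists_max_image (fun e => ⟪x - p, e⟫) hAne
      have hxe : x ∉ C e := fun h => hx (mem_biUnion he h)
      rw [hCmem] at hxe
      push Not at hxe
      obtain ⟨e', he', hne, hle⟩ := hxe
      simp only [mem_iUnion]
      refine ⟨(e', e), by simp [he, he', hne], ?_⟩
      have := hmax e' he'
      simp only [mem_setOf_eq, inner_sub_right]
      linarith
    apply measure_mono_null hsub
    refine (measure_biUnion_null_iff (Finset.countable_toSet _)).2 ?_
    intro q hq
    apply null_line
    have : q.1 ≠ q.2 := by simpa using (Finset.mem_filter.1 hq).2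
    exact sub_ne_zero.2 this
  have hsum : ∀ F : E2 → ℝ, Integrable F → ∫ x, F x = ∑ e ∈ A, ∫ x in C e, F x := by
    intro F hF
    rw [← integral_biUnion_finset A (fun e _ => hCm e) hdisj (fun e _ => hF.integrableOn)]
    rw [← setIntegral_univ]
    apply setIntegral_congr_set
    refine (ae_eq_univ.2 hcover).symm
  rw [hsum _ iu, hsum _ id2, Finset.mul_sum]
  apply Finset.sum_le_sum
  intro e he
  apply hp_region hu hcs (hA e he) (hu0 e he) hk0 hkr (hCm e)
  · intro x hx
    by_contra hlt
    push Not at hlt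
    have h1 : ∑ e' ∈ A, w e' * ⟪x - p, e'⟫ = 0 := by
      have : ⟪x - p, ∑ e ∈ A, w e • e⟫ = 0 := by rw [hw0, inner_zero_right]
      rw [inner_sum] at this
      simpa [inner_smul_right] using this
    have h2 : ∑ e' ∈ A, w e' * ⟪x - p, e'⟫ ≤ ∑ e' ∈ A, w e' * ⟪x - p, e⟫ := by
      apply Finset.sum_le_sum
      intro e' he'
      apply mul_le_mul_of_nonneg_left _ (hw e' he')
      by_cases hee : e' = e
      · rw [hee]
      · exact ((hCmem e x).1 hx e' he' hee).le
    rw [← Finset.sum_mul, hws] at h2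
    linarith
  · intro x hx t ht
    rw [hCmem] at hx ⊢
    intro e' he' hne
    have h1 := hx e' he' hne
    have h2 : ⟪e, e'⟫ ≤ 1 := by
      have := real_inner_le_norm e e'
      rwa [hA e he, hA e' he', mul_one] at this
    have h3 : ∀ g, ⟪x + t • e - p, g⟫ = ⟪x - p, g⟫ + t * ⟪e, g⟫ := by
      intro g
      rw [add_sub_right_comm, inner_add_left, inner_smul_left]; rfl
    rw [h3, h3, real_inner_self_eq_norm_sq, hA e he]
    nlinarith

def dSet (Ω : Set E2) : Set ℝ := { R : ℝ | ∃ u : E2 → ℝ, ContDiff ℝ (⊤ : ℕ∞) u ∧ HasCompactSupport u ∧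
    tsupport u ⊆ Ω ∧ (∫ x, (u x)^2) ≠ 0 ∧
    R = (∫ x, ‖fderiv ℝ u x‖^2) / (∫ x, (u x)^2) }

lemma dEig1_eq (Ω : Set E2) : dEig1 Ω = sInf (dSet Ω) := rfl

lemma dSet_bdd (Ω : Set E2) : BddBelow (dSet Ω) := by
  refine ⟨0, ?_⟩
  rintro R ⟨u, -, -, -, -, rfl⟩
  exact div_nonneg (integral_nonneg fun _ => sq_nonneg _) (integral_nonneg fun _ => sq_nonneg _)

lemma dSet_nonempty {Ω : Set E2} (hne : Ω.Nonempty) (hopen : IsOpen Ω) : (dSet Ω).Nonempty := by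
  obtain ⟨x, hx⟩ := hne
  obtain ⟨f, h1, h2, h3, h4, h5⟩ := exists_contDiff_tsupport_subset (n := (⊤ : ℕ∞)) (hopen.mem_nhds hx)
  refine ⟨_, f, h3, h2, h1, ?_, rfl⟩
  have hcs : HasCompactSupport (fun x => f x ^ 2) := by
    apply h2.comp_left (g := fun t : ℝ => t ^ 2); norm_num
  have := (h3.continuous.pow 2).integral_pos_of_hasCompactSupport_nonneg_nonzero (μ := (volume : Measure E2)) hcs
    (fun x => sq_nonneg _) (x := x) (by simp [h5])
  exact this.ne'

lemma dEig_lower {Ω : Set E2} (hne : Ω.Nonempty) (hopen : IsOpen Ω) {p : E2} {r : ℝ} {w : Fin 3 → ℝ}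
    {e : Fin 3 → E2} (hr : 0 < r) (he : ∀ i, ‖e i‖ = 1) (hs : ∀ i, ∀ x ∈ Ω, ⟪x - p, e i⟫ < r)
    (hw : ∀ i, 0 ≤ w i) (hws : ∑ i, w i = 1) (hw0 : ∑ i, w i • e i = 0) :
    π ^ 2 / (4 * r ^ 2) ≤ dEig1 Ω := by
  rw [dEig1_eq]
  apply le_csInf (dSet_nonempty hne hopen)
  rintro R ⟨u, hu, hcs, hsupp, hu2, rfl⟩
  have hupos : 0 < ∫ x, u x ^ 2 := lt_of_le_of_ne (integral_nonneg fun _ => sq_nonneg _) hu2.symm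
  have key : ∀ k, 0 < k → k < π / (2 * r) → k ^ 2 ≤ (∫ x, ‖fderiv ℝ u x‖^2) / (∫ x, (u x)^2) := by
    intro k hk0 hk
    rw [le_div_iff₀ hupos]
    classical
    apply hp_test (A := Finset.univ.image e) (w := fun e' => ∑ i with e i = e', w i) (p := p) (r := r)
      (hu.of_le (by exact_mod_cast le_top)) hcs _ _ _ _ _ hk0
    · rw [lt_div_iff₀ (by positivity)] at hk; linarith
    · intro e' h; simp at h; obtain ⟨i, rfl⟩ := h; exact he i
    · intro e' _; exact Finset.sum_nonneg fun i _ => hw i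
    · rw [Finset.sum_fiberwise_of_maps_to (fun i _ => Finset.mem_image_of_mem e (Finset.mem_univ i))]
      exact hws
    · rw [← hw0, ← Finset.sum_fiberwise_of_maps_to (g := e) (t := Finset.univ.image e)
        (fun i _ => Finset.mem_image_of_mem e (Finset.mem_univ i))]
      refine Finset.sum_congr rfl fun e' _ => ?_
      rw [Finset.sum_smul]
      refine Finset.sum_congr rfl fun i hi => ?_
      rw [(Finset.mem_filter.1 hi).2]
    · intro e' h x hx
      simp at h; obtain ⟨i, rfl⟩ := h
      by_contra hne
      have : x ∈ Ω := hsupp (subset_tsupport u hne)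
      have := hs i x this
      linarith
  have hlim : Tendsto (fun k : ℝ => k ^ 2) (nhdsWithin (π / (2 * r)) (Iio (π / (2 * r))))
      (nhds ((π / (2 * r)) ^ 2)) := ((continuous_pow 2).tendsto _).mono_left nhdsWithin_le_nhds
  have hpos : 0 < π / (2 * r) := by positivity
  have h1 : (π / (2 * r)) ^ 2 ≤ (∫ x, ‖fderiv ℝ u x‖^2) / (∫ x, (u x)^2) := by
    apply le_of_tendsto hlim
    have h2 : ∀ᶠ k in nhdsWithin (π / (2 * r)) (Iio (π / (2 * r))), 0 < k :=
      nhdsWithin_le_nhds (lt_mem_nhds hpos)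
    filter_upwards [h2, self_mem_nhdsWithin] with k hk hk'
    exact key k hk hk'
  have h3 : π ^ 2 / (4 * r ^ 2) = (π / (2 * r)) ^ 2 := by rw [div_pow]; ring
  rw [h3]; exact h1

lemma dEig_upper {Ω : Set E2} {p : E2} {r : ℝ} (hr : 0 < r) (hball : Metric.ball p r ⊆ Ω) :
    r ^ 2 * dEig1 Ω ≤ dEig1 unitDisc := by
  rw [dEig1_eq unitDisc]
  apply le_csInf (dSet_nonempty ⟨0, by simp [unitDisc]⟩ Metric.isOpen_ball)
  rintro R ⟨u, hu, hcs, hsupp, hu2, rfl⟩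
  set v : E2 → ℝ := fun x => u (r⁻¹ • (x - p)) with hv
  have hvs : ContDiff ℝ (⊤ : ℕ∞) v := hu.comp (by fun_prop)
  have hIntg : ∀ F : E2 → ℝ, ∫ x, F (r⁻¹ • (x - p)) = r ^ 2 * ∫ x, F x := by
    intro F
    rw [integral_sub_right_eq_self (fun x => F (r⁻¹ • x)) p, Measure.integral_comp_inv_smul]
    simp [abs_of_pos (pow_pos hr 2)]
  have hfd : ∀ x, fderiv ℝ v x = r⁻¹ • fderiv ℝ u (r⁻¹ • (x - p)) := by
    intro x
    have h1 : HasFDerivAt (fun x : E2 => r⁻¹ • (x - p)) (r⁻¹ • ContinuousLinearMap.id ℝ E2) x :=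
      HasFDerivAt.const_smul (f := fun x : E2 => x - p) ((hasFDerivAt_id x).sub_const p) r⁻¹
    have h2 := ((hu.differentiable (by simp)) (r⁻¹ • (x - p))).hasFDerivAt.comp x h1
    rw [show fderiv ℝ v x = _ from h2.fderiv]
    ext y; simp
  have e1 : ∫ x, v x ^ 2 = r ^ 2 * ∫ x, u x ^ 2 := hIntg (fun x => u x ^ 2)
  have e2 : ∫ x, ‖fderiv ℝ v x‖ ^ 2 = ∫ x, ‖fderiv ℝ u x‖ ^ 2 := by
    have h1 : ∀ x, ‖fderiv ℝ v x‖ ^ 2 = (fun y => (r⁻¹) ^ 2 * ‖fderiv ℝ u y‖ ^ 2) (r⁻¹ • (x - p)) := by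
      intro x
      rw [hfd, norm_smul, mul_pow, Real.norm_eq_abs, sq_abs]
    refine (integral_congr_ae (Eventually.of_forall h1)).trans
      ((hIntg (fun y => (r⁻¹) ^ 2 * ‖fderiv ℝ u y‖ ^ 2)).trans ?_)
    rw [integral_const_mul, ← mul_assoc]
    field_simp
  have hmem : (∫ x, ‖fderiv ℝ v x‖^2) / (∫ x, (v x)^2) ∈ dSet Ω := by
    have hts : tsupport v ⊆ (fun y => p + r • y) '' tsupport u := by
      apply closure_minimal
      · intro x hx
        refine ⟨r⁻¹ • (x - p), subset_tsupport u hx, ?_⟩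
        simp [smul_smul, hr.ne']
      · exact (hcs.isCompact.image (by fun_prop)).isClosed
    refine ⟨v, hvs, ?_, ?_, ?_, rfl⟩
    · exact HasCompactSupport.intro' (hcs.isCompact.image (f := fun y => p + r • y) (by fun_prop))
        (hcs.isCompact.image (by fun_prop)).isClosed
        (fun x hx => by
          by_contra h
          exact hx (hts (subset_tsupport v h)))
    · intro x hx
      obtain ⟨y, hy, rfl⟩ := hts hx
      apply hball
      have := hsupp hy
      simp only [unitDisc, mem_ball_zero_iff] at this
      simp only [Metric.mem_ball, dist_self_add_left, norm_smul, Real.norm_eq_abs, abs_of_pos hr]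
      nlinarith
    · rw [e1]; positivity
  have h := csInf_le (dSet_bdd Ω) hmem
  rw [← dEig1_eq, e1, e2] at h
  calc r ^ 2 * dEig1 Ω ≤ r ^ 2 * ((∫ x, ‖fderiv ℝ u x‖^2) / (r ^ 2 * ∫ x, (u x)^2)) := by gcongr
    _ = _ := by field_simp

lemma pw_alg (k T f f' φ h h' h'' : ℝ) (hk : 0 < k) (hh : 0 < h) (hh'' : h'' ≤ 0) :
    ((-k * ((1 + T ^ 2) * k) + (h'' * (2 * h) - h' * (2 * h')) / (2 * h) ^ 2) * h
      - (-k * T + h' / (2 * h)) * h') / h ^ 2 * φ ^ 2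
      + (-k * T + h' / (2 * h)) / h * (2 * φ * (f * h)) - (2 * f' * φ + 2 * f * (f * h))
    ≤ f' ^ 2 * h / k ^ 2 - f ^ 2 * h := by
  have key : (f' ^ 2 * h / k ^ 2 - f ^ 2 * h) -
      (((-k * ((1 + T ^ 2) * k) + (h'' * (2 * h) - h' * (2 * h')) / (2 * h) ^ 2) * h
      - (-k * T + h' / (2 * h)) * h') / h ^ 2 * φ ^ 2
      + (-k * T + h' / (2 * h)) / h * (2 * φ * (f * h)) - (2 * f' * φ + 2 * f * (f * h)))
      = (f' * h / k + k * φ) ^ 2 / h + (f * h - (-k * T + h' / (2 * h)) * φ) ^ 2 / h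
        + φ ^ 2 / h * (3 * (h' / (2 * h)) ^ 2 + (-h'') / (2 * h)) := by
    field_simp
    ring
  have h1 : 0 ≤ (f' * h / k + k * φ) ^ 2 / h + (f * h - (-k * T + h' / (2 * h)) * φ) ^ 2 / h
        + φ ^ 2 / h * (3 * (h' / (2 * h)) ^ 2 + (-h'') / (2 * h)) := by
    have : 0 ≤ (-h'') / (2 * h) := div_nonneg (by linarith) (by linarith)
    positivity
  linarith

lemma pw_smooth {a b k : ℝ} (hab : a < b) {h h' h'' f f' : ℝ → ℝ}
    (hh : ∀ x ∈ Icc a b, HasDerivAt h (h' x) x) (hh' : ∀ x ∈ Icc a b, HasDerivAt h' (h'' x) x)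
    (hpos : ∀ x ∈ Icc a b, 0 < h x) (hneg : ∀ x ∈ Icc a b, h'' x ≤ 0)
    (hf : ∀ x, HasDerivAt f (f' x) x) (hf'c : Continuous f') (hk : 0 < k) (hkab : k * (b - a) < π)
    (hmean : ∫ x in a..b, f x * h x = 0) :
    k ^ 2 * ∫ x in a..b, f x ^ 2 * h x ≤ ∫ x in a..b, f' x ^ 2 * h x := by
  have hfc : Continuous f := continuous_iff_continuousAt.2 fun y => (hf y).continuousAt
  have hhc : ContinuousOn h (Icc a b) := fun x hx => (hh x hx).continuousAt.continuousWithinAt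
  have hh'c : ContinuousOn h' (Icc a b) := fun x hx => (hh' x hx).continuousAt.continuousWithinAt
  have hfh : ContinuousOn (fun x => f x * h x) (Icc a b) := hfc.continuousOn.mul hhc
  set φ : ℝ → ℝ := fun x => ∫ y in a..x, f y * h y with hφ
  set c := (a + b) / 2 with hc
  have hφc : ContinuousOn φ (Icc a b) := by
    have := intervalIntegral.continuousOn_primitive_interval (f := fun y => f y * h y) (a := a) (b := b)
      (μ := volume) (by rw [uIcc_of_le hab.le]; exact hfh.integrableOn_Icc)
    rwa [uIcc_of_le hab.le] at this
  have hφd : ∀ x ∈ Ioo a b, HasDerivAt φ (f x * h x) x := by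
    intro x hx
    apply intervalIntegral.integral_hasDerivAt_right
    · apply ContinuousOn.intervalIntegrable
      rw [uIcc_of_le hx.1.le]
      exact hfh.mono (Icc_subset_Icc_right hx.2.le)
    · exact (hfh.mono Ioo_subset_Icc_self).stronglyMeasurableAtFilter isOpen_Ioo x hx
    · exact (hfc.continuousAt).mul (hh x (Ioo_subset_Icc_self hx)).continuousAt
  have hcos : ∀ x ∈ Icc a b, 0 < cos (k * (x - c)) := by
    intro x hx
    apply cos_pos_of_mem_Ioo
    have h1 : -((b - a) / 2) ≤ x - c := by rw [hc]; linarith [hx.1]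
    have h2 : x - c ≤ (b - a) / 2 := by rw [hc]; linarith [hx.2]
    constructor <;> nlinarith
  have htan : ∀ x ∈ Icc a b, HasDerivAt (fun x => tan (k * (x - c)))
      ((1 + tan (k * (x - c)) ^ 2) * k) x := by
    intro x hx
    have h1 : HasDerivAt (fun x => k * (x - c)) k x := by
      simpa using ((hasDerivAt_id x).sub_const c).const_mul k
    have h2 := (Real.hasDerivAt_tan (hcos x hx).ne').comp x h1
    refine HasDerivAt.congr_deriv h2 ?_
    have hcx := hcos x hx
    rw [tan_eq_sin_div_cos]
    have := sin_sq_add_cos_sq (k * (x - c))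
    field_simp
    linarith
  have hB : ∀ x ∈ Icc a b, HasDerivAt (fun x => (-k * tan (k * (x - c)) + h' x / (2 * h x)) / h x)
      (((-k * ((1 + tan (k * (x - c)) ^ 2) * k) + (h'' x * (2 * h x) - h' x * (2 * h' x)) / (2 * h x) ^ 2) * h x
      - (-k * tan (k * (x - c)) + h' x / (2 * h x)) * h' x) / h x ^ 2) x := by
    intro x hx
    have hx0 := hpos x hx
    exact (((htan x hx).const_mul (-k)).add
      ((hh' x hx).div ((hh x hx).const_mul 2) (by positivity))).div (hh x hx) hx0.ne'
  have hBc : ContinuousOn (fun x => (-k * tan (k * (x - c)) + h' x / (2 * h x)) / h x) (Icc a b) :=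
    fun x hx => (hB x hx).continuousAt.continuousWithinAt
  have gint : ContinuousOn (fun x => f' x ^ 2 * h x / k ^ 2 - f x ^ 2 * h x) (Icc a b) := by
    fun_prop
  have key := intervalIntegral.sub_le_integral_of_hasDeriv_right_of_le hab.le
    (g := fun x => (-k * tan (k * (x - c)) + h' x / (2 * h x)) / h x * φ x ^ 2 - 2 * f x * φ x)
    (φ := fun x => f' x ^ 2 * h x / k ^ 2 - f x ^ 2 * h x)
    (g' := fun x => ((-k * ((1 + tan (k * (x - c)) ^ 2) * k) + (h'' x * (2 * h x) - h' x * (2 * h' x)) / (2 * h x) ^ 2) * h x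
      - (-k * tan (k * (x - c)) + h' x / (2 * h x)) * h' x) / h x ^ 2 * φ x ^ 2
      + (-k * tan (k * (x - c)) + h' x / (2 * h x)) / h x * (2 * φ x * (f x * h x))
        - (2 * f' x * φ x + 2 * f x * (f x * h x)))
    (by
      apply ContinuousOn.sub
      · exact hBc.mul (hφc.pow 2)
      · exact ((continuous_const.mul hfc).continuousOn).mul hφc)
    (by
      intro x hx
      have d1 := (hB x (Ioo_subset_Icc_self hx)).mul ((hφd x hx).pow 2)
      have d2 := ((hf x).const_mul 2).mul (hφd x hx)
      refine (HasDerivAt.congr_deriv (d1.sub d2) ?_).hasDerivWithinAt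
      simp only [Pi.pow_apply]
      norm_num)
    gint.integrableOn_Icc
    (by
      intro x hx
      exact pw_alg k _ _ _ _ _ _ _ hk (hpos x (Ioo_subset_Icc_self hx)) (hneg x (Ioo_subset_Icc_self hx)))
  have hφa : φ a = 0 := by simp [hφ]
  have hφb : φ b = 0 := hmean
  simp only [hφa, hφb] at key
  have i1 : IntervalIntegrable (fun x => f' x ^ 2 * h x / k ^ 2) volume a b := by
    apply ContinuousOn.intervalIntegrable; rw [uIcc_of_le hab.le]; fun_prop
  have i2 : IntervalIntegrable (fun x => f x ^ 2 * h x) volume a b := by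
    apply ContinuousOn.intervalIntegrable; rw [uIcc_of_le hab.le]; fun_prop
  rw [intervalIntegral.integral_sub i1 i2, intervalIntegral.integral_div] at key
  have : (∫ x in a..b, f x ^ 2 * h x) ≤ (∫ x in a..b, f' x ^ 2 * h x) / k ^ 2 := by linarith
  rw [le_div_iff₀ (by positivity)] at this
  linarith

lemma pw_var {a b k : ℝ} (hab : a < b) {h h' h'' f f' : ℝ → ℝ}
    (hh : ∀ x ∈ Icc a b, HasDerivAt h (h' x) x) (hh' : ∀ x ∈ Icc a b, HasDerivAt h' (h'' x) x)
    (hpos : ∀ x ∈ Icc a b, 0 < h x) (hneg : ∀ x ∈ Icc a b, h'' x ≤ 0)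
    (hf : ∀ x, HasDerivAt f (f' x) x) (hf'c : Continuous f') (hk : 0 < k) (hkab : k * (b - a) < π) :
    k ^ 2 * ((∫ x in a..b, f x ^ 2 * h x) * (∫ x in a..b, 1 * h x) - (∫ x in a..b, f x * h x) ^ 2)
      ≤ (∫ x in a..b, f' x ^ 2 * h x) * (∫ x in a..b, 1 * h x) := by
  have hfc : Continuous f := continuous_iff_continuousAt.2 fun y => (hf y).continuousAt
  have hhc : ContinuousOn h (Icc a b) := fun x hx => (hh x hx).continuousAt.continuousWithinAt
  simp only [one_mul]
  set H := ∫ x in a..b, h x with hH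
  have hHpos : 0 < H := by
    apply intervalIntegral.intervalIntegral_pos_of_pos_on _ (fun x hx => hpos x (Ioo_subset_Icc_self hx)) hab
    apply ContinuousOn.intervalIntegrable; rwa [uIcc_of_le hab.le]
  set S := ∫ x in a..b, f x * h x with hS
  set m := S / H with hm
  have i0 : IntervalIntegrable h volume a b := by
    apply ContinuousOn.intervalIntegrable; rwa [uIcc_of_le hab.le]
  have i1 : IntervalIntegrable (fun x => f x * h x) volume a b := by
    apply ContinuousOn.intervalIntegrable; rw [uIcc_of_le hab.le]; fun_prop
  have i2 : IntervalIntegrable (fun x => f x ^ 2 * h x) volume a b := by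
    apply ContinuousOn.intervalIntegrable; rw [uIcc_of_le hab.le]; fun_prop
  have e1 : ∫ x in a..b, (f x - m) * h x = 0 := by
    simp only [sub_mul]
    rw [intervalIntegral.integral_sub i1 (i0.const_mul m), intervalIntegral.integral_const_mul, hm]
    rw [← hS, ← hH]; field_simp; ring
  have e2 : ∫ x in a..b, (f x - m) ^ 2 * h x = (∫ x in a..b, f x ^ 2 * h x) - 2 * m * S + m ^ 2 * H := by
    have : ∀ x, (f x - m) ^ 2 * h x = (f x ^ 2 * h x - 2 * m * (f x * h x)) + m ^ 2 * h x := by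
      intro x; ring
    simp only [this]
    rw [intervalIntegral.integral_add (i2.sub (i1.const_mul _)) (i0.const_mul _),
      intervalIntegral.integral_sub i2 (i1.const_mul _), intervalIntegral.integral_const_mul,
      intervalIntegral.integral_const_mul]
  have := pw_smooth hab hh hh' hpos hneg (f := fun x => f x - m) (f' := f')
    (fun x => (hf x).sub_const m) hf'c hk hkab e1
  rw [e2] at this
  have h2 := mul_le_mul_of_nonneg_right this hHpos.le
  have h3 : ((∫ x in a..b, f x ^ 2 * h x) - 2 * m * S + m ^ 2 * H) * H
      = (∫ x in a..b, f x ^ 2 * h x) * H - S ^ 2 := by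
    rw [hm]; field_simp; ring
  calc _ = k ^ 2 * ((∫ x in a..b, f x ^ 2 * h x) - 2 * m * S + m ^ 2 * H) * H := by
        rw [mul_assoc, h3]
    _ ≤ _ := h2


lemma smooth_step {a b t k : ℝ} {h f f' : ℝ → ℝ} (ht : 0 < t) (htab : a + t < b - 3 * t)
    (hi : Integrable h) (hm : Measurable h) (hc : ConcaveOn ℝ (Ioo a b) h)
    (hpos : ∀ x ∈ Ioo a b, 0 < h x)
    (hf : ∀ x, HasDerivAt f (f' x) x) (hf'c : Continuous f') (hk : 0 < k) (hkab : k * (b - a) ≤ π) :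
    ∃ g : ℝ → ℝ, Continuous g ∧ (∀ x ∈ Icc (a + t) (b - 3 * t), ∃ d ∈ Ioo x (x + 2 * t), g x = h d) ∧
    k ^ 2 * ((∫ x in (a + t)..(b - 3 * t), f x ^ 2 * g x) * (∫ x in (a + t)..(b - 3 * t), 1 * g x)
        - (∫ x in (a + t)..(b - 3 * t), f x * g x) ^ 2)
      ≤ (∫ x in (a + t)..(b - 3 * t), f' x ^ 2 * g x) * (∫ x in (a + t)..(b - 3 * t), 1 * g x) := by
  have hcont : ∀ x ∈ Ioo a b, ContinuousAt h x := fun x hx =>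
    (hc.continuousOn isOpen_Ioo).continuousAt (isOpen_Ioo.mem_nhds hx)
  set P1 : ℝ → ℝ := fun x => ∫ s in a..x, h s with hP1
  set P2 : ℝ → ℝ := fun x => ∫ s in a..x, P1 s with hP2
  have hP1c : Continuous P1 := intervalIntegral.continuous_primitive (fun _ _ => hi.intervalIntegrable) a
  have hP2d : ∀ x, HasDerivAt P2 (P1 x) x := fun x =>
    intervalIntegral.integral_hasDerivAt_right (hP1c.intervalIntegrable _ _)
      (hP1c.stronglyMeasurableAtFilter _ _) hP1c.continuousAt
  have hP1d : ∀ x ∈ Ioo a b, HasDerivAt P1 (h x) x := fun x hx =>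
    intervalIntegral.integral_hasDerivAt_right hi.intervalIntegrable
      (hm.stronglyMeasurable.stronglyMeasurableAtFilter) (hcont x hx)
  have hP2c : Continuous P2 := continuous_iff_continuousAt.2 fun x => (hP2d x).continuousAt
  set g : ℝ → ℝ := fun x => (P2 (x + 2 * t) - 2 * P2 (x + t) + P2 x) / t ^ 2 with hg
  have key : ∀ x ∈ Icc (a + t) (b - 3 * t), ∃ d ∈ Ioo x (x + 2 * t), g x = h d := by
    intro x hx
    obtain ⟨c, hc1, hc2⟩ := exists_hasDerivAt_eq_slope (fun y => P2 (y + t) - P2 y)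
      (fun y => P1 (y + t) - P1 y) (show x < x + t by linarith) (by fun_prop)
      (fun y _ => ((hP2d (y + t)).comp_add_const y t).sub (hP2d y))
    obtain ⟨d, hd1, hd2⟩ := exists_hasDerivAt_eq_slope P1 h (show c < c + t by linarith) (by fun_prop)
      (fun y hy => hP1d y ⟨by linarith [hx.1, hc1.1, hy.1], by linarith [hx.2, hc1.2, hy.2]⟩)
    refine ⟨d, ⟨by linarith [hc1.1, hd1.1], by linarith [hc1.2, hd1.2]⟩, ?_⟩
    have e1 : x + t + t = x + 2 * t := by ring
    have e2 : x + t - x = t := by ring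
    have e3 : c + t - c = t := by ring
    simp only [e1, e2] at hc2
    rw [e3, hc2] at hd2
    rw [hd2, hg]
    field_simp
    ring
  refine ⟨g, by fun_prop, key, ?_⟩
  refine pw_var (k := k) (h := g) (h' := fun x => (P1 (x + 2 * t) - 2 * P1 (x + t) + P1 x) / t ^ 2)
    (h'' := fun x => (h (x + 2 * t) - 2 * h (x + t) + h x) / t ^ 2) htab ?_ ?_ ?_ ?_ hf hf'c hk ?_
  · intro x hx
    exact ((((hP2d (x + 2 * t)).comp_add_const x (2 * t)).sub
      (((hP2d (x + t)).comp_add_const x t).const_mul 2)).add (hP2d x)).div_const _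
  · intro x hx
    exact ((((hP1d (x + 2 * t) ⟨by linarith [hx.1], by linarith [hx.2]⟩).comp_add_const x (2 * t)).sub
      (((hP1d (x + t) ⟨by linarith [hx.1], by linarith [hx.2]⟩).comp_add_const x t).const_mul 2)).add
      (hP1d x ⟨by linarith [hx.1], by linarith [hx.2]⟩)).div_const _
  · intro x hx
    obtain ⟨d, hd, hgd⟩ := key x hx
    rw [hgd]
    exact hpos d ⟨by linarith [hx.1, hd.1], by linarith [hx.2, hd.2]⟩
  · intro x hx
    have hxa : x ∈ Ioo a b := ⟨by linarith [hx.1], by linarith [hx.2]⟩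
    have hxb : x + 2 * t ∈ Ioo a b := ⟨by linarith [hx.1], by linarith [hx.2]⟩
    have := hc.2 hxa hxb (show (0:ℝ) ≤ 1/2 by norm_num) (show (0:ℝ) ≤ 1/2 by norm_num) (by norm_num)
    simp only [smul_eq_mul] at this
    rw [show (1/2 : ℝ) * x + 1/2 * (x + 2 * t) = x + t by ring] at this
    apply div_nonpos_of_nonpos_of_nonneg <;> [linarith; positivity]
  · have : k * (b - 3 * t - (a + t)) < k * (b - a) := mul_lt_mul_of_pos_left (by linarith) hk
    linarith

lemma pw_concave {a b L M : ℝ} {h f f' : ℝ → ℝ} (hab : a < b) (hL : b - a ≤ L)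
    (hm : Measurable h) (hc : ConcaveOn ℝ (Ioo a b) h)
    (hpos : ∀ x ∈ Ioo a b, 0 < h x) (hzero : ∀ x, x ∉ Ioo a b → h x = 0) (hM : ∀ x, h x ≤ M)
    (hf : ∀ x, HasDerivAt f (f' x) x) (hf'c : Continuous f') :
    (π / L) ^ 2 * ((∫ x, f x ^ 2 * h x) * (∫ x, h x) - (∫ x, f x * h x) ^ 2)
      ≤ (∫ x, f' x ^ 2 * h x) * (∫ x, h x) := by
  have hLpos : 0 < L := by linarith
  have hh0 : ∀ x, 0 ≤ h x := fun x => by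
    by_cases hx : x ∈ Ioo a b
    · exact (hpos x hx).le
    · exact (hzero x hx).ge
  have hMpos : 0 ≤ M := (hh0 a).trans (hM a)
  have hfc : Continuous f := continuous_iff_continuousAt.2 fun x => (hf x).continuousAt
  have hcont : ∀ x ∈ Ioo a b, ContinuousAt h x := fun x hx =>
    (hc.continuousOn isOpen_Ioo).continuousAt (isOpen_Ioo.mem_nhds hx)
  have hi : Integrable h := by
    refine Integrable.mono' (g := (Ioo a b).indicator fun _ => M) ?_ hm.aestronglyMeasurable ?_
    · exact (integrable_indicator_iff measurableSet_Ioo).2 (integrableOn_const (by simp))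
    · refine ae_of_all _ fun x => ?_
      rw [Real.norm_of_nonneg (hh0 x)]
      by_cases hx : x ∈ Ioo a b
      · rw [indicator_of_mem hx]; exact hM x
      · rw [indicator_of_notMem hx, hzero x hx]
  set t : ℕ → ℝ := fun n => (b - a) / 8 * (1 / ((n : ℝ) + 1)) with ht
  have htpos : ∀ n, 0 < t n := fun n => by
    have : 0 < b - a := by linarith
    simp only [ht]; positivity
  have htlt : ∀ n, a + t n < b - 3 * t n := fun n => by
    have h1 : 1 / ((n : ℝ) + 1) ≤ 1 := by
      rw [div_le_one (by positivity)]; have : (0:ℝ) ≤ n := by positivity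
      linarith
    have : t n ≤ (b - a) / 8 := by
      simp only [ht]; exact mul_le_of_le_one_right (by linarith) h1
    linarith
  have htlim : Tendsto t atTop (nhds 0) := by
    have := (tendsto_one_div_add_atTop_nhds_zero_nat (𝕜 := ℝ)).const_mul ((b - a) / 8)
    simpa [ht] using this
  have hkL : π / L * (b - a) ≤ π := by
    rw [div_mul_eq_mul_div, div_le_iff₀ hLpos]; exact mul_le_mul_of_nonneg_left hL pi_pos.le
  choose g hgc hgd hgi using fun n => smooth_step (htpos n) (htlt n) hi hm hc hpos hf hf'c
    (div_pos pi_pos hLpos) hkL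
  -- convergence
  have lim : ∀ φ : ℝ → ℝ, Continuous φ →
      Tendsto (fun n => ∫ x in (a + t n)..(b - 3 * t n), φ x * g n x) atTop (nhds (∫ x, φ x * h x)) := by
    intro φ hφ
    obtain ⟨C, hC⟩ := (isCompact_Icc (a := a) (b := b)).exists_bound_of_continuousOn hφ.continuousOn
    have e : ∀ n, ∫ x in (a + t n)..(b - 3 * t n), φ x * g n x =
        ∫ x, (Ioc (a + t n) (b - 3 * t n)).indicator (fun x => φ x * g n x) x := fun n => by
      rw [intervalIntegral.integral_of_le (htlt n).le, integral_indicator measurableSet_Ioc]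
    simp_rw [e]
    refine tendsto_integral_of_dominated_convergence ((Ioo a b).indicator fun _ => C * M) ?_ ?_ ?_ ?_
    · intro n
      exact ((hφ.mul (hgc n)).measurable.indicator measurableSet_Ioc).aestronglyMeasurable
    · exact (integrable_indicator_iff measurableSet_Ioo).2 (integrableOn_const (by simp))
    · intro n
      refine ae_of_all _ fun x => ?_
      by_cases hx : x ∈ Ioc (a + t n) (b - 3 * t n)
      · have hx' : x ∈ Ioo a b := ⟨by linarith [hx.1, htpos n], by linarith [hx.2, htpos n]⟩
        rw [indicator_of_mem hx, indicator_of_mem hx', norm_mul]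
        obtain ⟨d, hd, hd'⟩ := hgd n x ⟨hx.1.le, hx.2⟩
        rw [hd', Real.norm_of_nonneg (hh0 d)]
        exact mul_le_mul (hC x ⟨hx'.1.le, hx'.2.le⟩) (hM d) (hh0 d)
          ((norm_nonneg _).trans (hC x ⟨hx'.1.le, hx'.2.le⟩))
      · rw [indicator_of_notMem hx, norm_zero]
        by_cases hx' : x ∈ Ioo a b
        · rw [indicator_of_mem hx']
          exact mul_nonneg ((norm_nonneg _).trans (hC x ⟨hx'.1.le, hx'.2.le⟩)) hMpos
        · rw [indicator_of_notMem hx']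
    · refine ae_of_all _ fun x => ?_
      by_cases hx : x ∈ Ioo a b
      · have ev : ∀ᶠ n in atTop, x ∈ Ioc (a + t n) (b - 3 * t n) := by
          have h1 : ∀ᶠ n in atTop, t n < min (x - a) ((b - x) / 3) :=
            htlim.eventually_lt_const (lt_min (by linarith [hx.1]) (by linarith [hx.2]))
          filter_upwards [h1] with n hn
          have h2 := lt_of_lt_of_le hn (min_le_left _ _)
          have h3 := lt_of_lt_of_le hn (min_le_right _ _)
          exact ⟨by linarith, by linarith⟩
        have hgl : Tendsto (fun n => g n x) atTop (nhds (h x)) := by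
          rw [Metric.tendsto_atTop']
          intro ε hε
          obtain ⟨δ, hδ, hδ'⟩ := Metric.continuousAt_iff.1 (hcont x hx) ε hε
          have h1 : ∀ᶠ n in atTop, t n < δ / 2 := htlim.eventually_lt_const (by linarith)
          obtain ⟨N, hN⟩ := eventually_atTop.1 (ev.and h1)
          refine ⟨N, fun n hn => ?_⟩
          obtain ⟨h2, h3⟩ := hN n hn.le
          obtain ⟨d, hd, hd'⟩ := hgd n x ⟨h2.1.le, h2.2⟩
          rw [hd']
          apply hδ'
          rw [Real.dist_eq, abs_of_pos (by linarith [hd.1])]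
          linarith [hd.2]
        refine (hgl.const_mul (φ x)).congr' ?_
        filter_upwards [ev] with n hn
        rw [indicator_of_mem hn]
      · rw [hzero x hx, mul_zero]
        refine tendsto_const_nhds.congr fun n => ?_
        rw [indicator_of_notMem]
        intro hx'
        exact hx ⟨by linarith [hx'.1, htpos n], by linarith [hx'.2, htpos n]⟩
  have l1 := lim (fun x => f x ^ 2) (by fun_prop)
  have l2 := lim (fun x => 1) (by fun_prop)
  have l3 := lim f hfc
  have l4 := lim (fun x => f' x ^ 2) (by fun_prop)
  have := le_of_tendsto_of_tendsto' (((l1.mul l2).sub (l3.pow 2)).const_mul ((π / L) ^ 2)) (l4.mul l2) hgi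
  simpa using this


lemma open_interval {S : Set ℝ} (ho : IsOpen S) (hc : Convex ℝ S) (hb : Bornology.IsBounded S)
    (hne : S.Nonempty) : ∃ a b, a < b ∧ S = Ioo a b := by
  have hba := hb.bddAbove
  have hbb := hb.bddBelow
  have key : S = Ioo (sInf S) (sSup S) := by
    apply Subset.antisymm
    · intro x hx
      obtain ⟨ε, hε, hball⟩ := Metric.isOpen_iff.1 ho x hx
      have h1 : x + ε / 2 ∈ S := hball (by rw [Metric.mem_ball, Real.dist_eq]; rw [show x + ε/2 - x = ε/2 by ring, abs_of_pos (by linarith)]; linarith)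
      have h2 : x - ε / 2 ∈ S := hball (by rw [Metric.mem_ball, Real.dist_eq]; rw [show x - ε/2 - x = -(ε/2) by ring, abs_neg, abs_of_pos (by linarith)]; linarith)
      exact ⟨by linarith [csInf_le hbb h2], by linarith [le_csSup hba h1]⟩
    · exact IsConnected.Ioo_csInf_csSup_subset ⟨hne, hc.isPreconnected⟩ hbb hba
  obtain ⟨x, hx⟩ := hne
  rw [key] at hx
  exact ⟨_, _, hx.1.trans hx.2, key⟩

/-- Slice of `K` orthogonal to `rot e` at abscissa `s`. -/
def slc (K : Set E2) (p e : E2) (s : ℝ) : Set ℝ := {y | p + Phi e (s, y) ∈ K}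

/-- Length of the slice. -/
def slh (K : Set E2) (p e : E2) (s : ℝ) : ℝ := (volume (slc K p e s)).toReal

/-- Projection. -/
def prj (K : Set E2) (p e : E2) : Set ℝ := {s | ∃ y, p + Phi e (s, y) ∈ K}

lemma slc_open {K : Set E2} (ho : IsOpen K) (p e : E2) (s : ℝ) : IsOpen (slc K p e s) := by
  refine ho.preimage ?_
  have := continuous_Phi e
  fun_prop

lemma Phi_lin (e : E2) (p : E2) (α β : ℝ) (hαβ : α + β = 1) (q q' : ℝ × ℝ) :
    p + Phi e (α * q.1 + β * q'.1, α * q.2 + β * q'.2) = α • (p + Phi e q) + β • (p + Phi e q') := by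
  have : p = α • p + β • p := by rw [← add_smul, hαβ, one_smul]
  conv_lhs => rw [this]
  simp only [Phi]
  module

lemma slc_mix {K : Set E2} (hc : Convex ℝ K) (p e : E2) {s s' y y' α β : ℝ}
    (hy : y ∈ slc K p e s) (hy' : y' ∈ slc K p e s') (hα : 0 ≤ α) (hβ : 0 ≤ β) (hαβ : α + β = 1) :
    α * y + β * y' ∈ slc K p e (α * s + β * s') := by
  have := hc hy hy' hα hβ hαβ
  rw [← Phi_lin e p α β hαβ (s, y) (s', y')] at this
  exact this

lemma slc_convex {K : Set E2} (hc : Convex ℝ K) (p e : E2) (s : ℝ) : Convex ℝ (slc K p e s) := by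
  intro y hy y' hy' α β hα hβ hαβ
  have := slc_mix hc p e hy hy' hα hβ hαβ
  rwa [← add_mul, hαβ, one_mul] at this

lemma slc_sub {K : Set E2} {p e : E2} (he : ‖e‖ = 1) {R : ℝ} (hR : ∀ x ∈ K, ‖x - p‖ ≤ R) (s : ℝ) :
    slc K p e s ⊆ Icc (-R) R := by
  intro y hy
  have h1 := hR _ hy
  have h2 := norm_Phi_sq he (s, y)
  rw [add_sub_cancel_left] at h1
  have h3 : |y| ≤ R := by
    refine le_trans ?_ h1
    apply abs_le_of_sq_le_sq _ (norm_nonneg _)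
    simp only at h2
    nlinarith [sq_nonneg s]
  exact abs_le.1 h3

lemma bdd_R {K : Set E2} (hb : Bornology.IsBounded K) (p : E2) : ∃ R, 0 < R ∧ ∀ x ∈ K, ‖x - p‖ ≤ R := by
  obtain ⟨R, hR0, hR⟩ := hb.subset_closedBall_lt 0 p
  exact ⟨R, hR0, fun x hx => by simpa [dist_eq_norm] using hR hx⟩

lemma slc_interval {K : Set E2} (ho : IsOpen K) (hc : Convex ℝ K) (hb : Bornology.IsBounded K)
    (p : E2) {e : E2} (he : ‖e‖ = 1) {s : ℝ} (hs : s ∈ prj K p e) :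
    ∃ c d, c < d ∧ slc K p e s = Ioo c d := by
  obtain ⟨R, -, hR⟩ := bdd_R hb p
  exact open_interval (slc_open ho p e s) (slc_convex hc p e s)
    ((Metric.isBounded_Icc _ _).subset (slc_sub he hR s)) hs

lemma prj_interval {K : Set E2} (hne : K.Nonempty) (ho : IsOpen K) (hc : Convex ℝ K)
    (hb : Bornology.IsBounded K) (p : E2) {e : E2} (he : ‖e‖ = 1) :
    ∃ a b, a < b ∧ prj K p e = Ioo a b := by
  obtain ⟨R, -, hR⟩ := bdd_R hb p
  apply open_interval
  · have : prj K p e = ⋃ y, {s | p + Phi e (s, y) ∈ K} := by ext s; simp [prj]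
    rw [this]
    refine isOpen_iUnion fun y => ho.preimage ?_
    have := continuous_Phi e
    fun_prop
  · rintro s ⟨y, hy⟩ s' ⟨y', hy'⟩ α β hα hβ hαβ
    exact ⟨_, slc_mix hc p e hy hy' hα hβ hαβ⟩
  · refine (Metric.isBounded_Icc (-R) R).subset ?_
    rintro s ⟨y, hy⟩
    have h1 := hR _ hy
    have h2 := norm_Phi_sq he (s, y)
    rw [add_sub_cancel_left] at h1
    have h3 : |s| ≤ R := by
      refine le_trans ?_ h1
      apply abs_le_of_sq_le_sq _ (norm_nonneg _)
      simp only at h2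
      nlinarith [sq_nonneg y]
    exact abs_le.1 h3
  · obtain ⟨x, hx⟩ := hne
    exact ⟨⟪x - p, rot e⟫, ⟪x - p, e⟫, by rwa [Psi_inner he]⟩

lemma slh_zero {K : Set E2} {p e : E2} {s : ℝ} (hs : s ∉ prj K p e) : slh K p e s = 0 := by
  have : slc K p e s = ∅ := by
    rw [eq_empty_iff_forall_notMem]
    intro y hy
    exact hs ⟨y, hy⟩
  simp [slh, this]

lemma slh_nonneg (K : Set E2) (p e : E2) (s : ℝ) : 0 ≤ slh K p e s := ENNReal.toReal_nonneg

lemma slh_pos {K : Set E2} (ho : IsOpen K) (hc : Convex ℝ K) (hb : Bornology.IsBounded K)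
    (p : E2) {e : E2} (he : ‖e‖ = 1) {s : ℝ} (hs : s ∈ prj K p e) : 0 < slh K p e s := by
  obtain ⟨c, d, hcd, h⟩ := slc_interval ho hc hb p he hs
  rw [slh, h, Real.volume_Ioo, ENNReal.toReal_ofReal (by linarith)]
  linarith

lemma slh_le {K : Set E2} {p : E2} {e : E2} {s c d : ℝ} (hcd : c ≤ d)
    (hs : slc K p e s ⊆ Icc c d) : slh K p e s ≤ d - c := by
  have h1 := measure_mono hs (μ := volume)
  rw [Real.volume_Icc] at h1
  exact ENNReal.toReal_le_of_le_ofReal (by linarith) h1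

lemma le_slh {K : Set E2} {p : E2} {e : E2} (he : ‖e‖ = 1) (hb : Bornology.IsBounded K) {s c d : ℝ}
    (hs : Ioo c d ⊆ slc K p e s) : d - c ≤ slh K p e s := by
  obtain ⟨R, hR0, hR⟩ := bdd_R hb p
  have h1 := measure_mono hs (μ := volume)
  rw [Real.volume_Ioo] at h1
  have h2 : volume (slc K p e s) ≠ ⊤ := by
    have := measure_mono (slc_sub he hR s) (μ := volume)
    rw [Real.volume_Icc] at this
    exact ne_top_of_le_ne_top (by simp) this
  have h3 := ENNReal.toReal_mono h2 h1
  exact le_trans (by rw [ENNReal.toReal_ofReal']; exact le_max_left _ _) h3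

lemma slh_bdd {K : Set E2} {p e : E2} (he : ‖e‖ = 1) {R : ℝ} (hR0 : 0 < R)
    (hR : ∀ x ∈ K, ‖x - p‖ ≤ R) (s : ℝ) : slh K p e s ≤ 2 * R := by
  have := slh_le (p := p) (e := e) (s := s) (by linarith) (slc_sub he hR s)
  linarith

lemma slh_concave {K : Set E2} (ho : IsOpen K) (hc : Convex ℝ K) (hb : Bornology.IsBounded K)
    (p : E2) {e : E2} (he : ‖e‖ = 1) {a b : ℝ} (hp : prj K p e = Ioo a b) :
    ConcaveOn ℝ (Ioo a b) (slh K p e) := by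
  refine ⟨convex_Ioo a b, ?_⟩
  intro s hs s' hs' α β hα hβ hαβ
  rw [← hp] at hs hs'
  obtain ⟨c, d, hcd, h⟩ := slc_interval ho hc hb p he hs
  obtain ⟨c', d', hcd', h'⟩ := slc_interval ho hc hb p he hs'
  have e1 : slh K p e s = d - c := by
    rw [slh, h, Real.volume_Ioo, ENNReal.toReal_ofReal (by linarith)]
  have e2 : slh K p e s' = d' - c' := by
    rw [slh, h', Real.volume_Ioo, ENNReal.toReal_ofReal (by linarith)]
  have h3 : (α * d + β * d') - (α * c + β * c') ≤ slh K p e (α * s + β * s') := by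
    apply le_slh he hb
    intro y hy
    have hl : 0 < (α * d + β * d') - (α * c + β * c') := by linarith [hy.1, hy.2]
    set τ := (y - (α * c + β * c')) / ((α * d + β * d') - (α * c + β * c')) with hτ
    have hτ0 : 0 < τ := div_pos (by linarith [hy.1]) hl
    have hτ1 : τ < 1 := by rw [hτ, div_lt_one hl]; linarith [hy.2]
    have hye : y = α * (c + τ * (d - c)) + β * (c' + τ * (d' - c')) := by
      have : τ * ((α * d + β * d') - (α * c + β * c')) = y - (α * c + β * c') :=
        div_mul_cancel₀ _ hl.ne'
      linear_combination -this
    rw [hye]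
    apply slc_mix hc p e _ _ hα hβ hαβ
    · rw [h]; constructor <;> nlinarith
    · rw [h']; constructor <;> nlinarith
  simp only [smul_eq_mul, e1, e2]
  linarith

lemma slh_measurable {K : Set E2} (ho : IsOpen K) (p e : E2) : Measurable (slh K p e) := by
  have hK : MeasurableSet {q : ℝ × ℝ | p + Phi e q ∈ K} := by
    refine (ho.preimage ?_).measurableSet
    have := continuous_Phi e
    fun_prop
  exact (measurable_measure_prodMk_left hK).ennreal_toReal

lemma slice_fubini {K : Set E2} (ho : IsOpen K) (hb : Bornology.IsBounded K) (p : E2) {e : E2}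
    (he : ‖e‖ = 1) {G : ℝ → ℝ} (hG : Continuous G) :
    ∫ x in K, G ⟪x - p, rot e⟫ = ∫ s, G s * slh K p e s := by
  have hIntg : Integrable (K.indicator fun x => G ⟪x - p, rot e⟫) := by
    rw [integrable_indicator_iff ho.measurableSet]
    refine IntegrableOn.mono_set ?_ subset_closure
    refine ContinuousOn.integrableOn_compact hb.isCompact_closure ?_
    fun_prop
  rw [← integral_indicator ho.measurableSet, integral_coord he p]
  have h2 := integrable_coord he p hIntg
  rw [Measure.volume_eq_prod] at h2 ⊢
  rw [integral_prod _ h2]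
  congr 1
  ext s
  have : (fun y => K.indicator (fun x => G ⟪x - p, rot e⟫) (p + Phi e (s, y))) =
      (slc K p e s).indicator (fun _ => G s) := by
    ext y
    by_cases hy : y ∈ slc K p e s
    · rw [indicator_of_mem hy, indicator_of_mem (show p + Phi e (s, y) ∈ K from hy),
        add_sub_cancel_left, inner_Phi_rot he]
    · rw [indicator_of_notMem hy, indicator_of_notMem (show p + Phi e (s, y) ∉ K from hy)]
  rw [this, integral_indicator (slc_open ho p e s).measurableSet, setIntegral_const, smul_eq_mul, mul_comm]
  rfl

lemma slice_vol {K : Set E2} (ho : IsOpen K) (hb : Bornology.IsBounded K) (p : E2) {e : E2}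
    (he : ‖e‖ = 1) : (volume K).toReal = ∫ s, slh K p e s := by
  have := slice_fubini ho hb p he (G := fun _ => 1) continuous_const
  simpa [Measure.real] using this

lemma slh_integrable {K : Set E2} (hne : K.Nonempty) (ho : IsOpen K) (hc : Convex ℝ K)
    (hb : Bornology.IsBounded K) (p : E2) {e : E2} (he : ‖e‖ = 1) {G : ℝ → ℝ} (hG : Continuous G) :
    Integrable (fun s => G s * slh K p e s) := by
  obtain ⟨R, hR0, hR⟩ := bdd_R hb p
  obtain ⟨a, b, hab, hp⟩ := prj_interval hne ho hc hb p he
  obtain ⟨C, hC⟩ := (isCompact_Icc (a := a) (b := b)).exists_bound_of_continuousOn hG.continuousOn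
  refine Integrable.mono' (g := (Ioo a b).indicator fun _ => C * (2 * R)) ?_
    (hG.measurable.mul (slh_measurable ho p e)).aestronglyMeasurable ?_
  · exact (integrable_indicator_iff measurableSet_Ioo).2 (integrableOn_const (by simp))
  · refine ae_of_all _ fun x => ?_
    by_cases hx : x ∈ Ioo a b
    · rw [indicator_of_mem hx, norm_mul, Real.norm_of_nonneg (slh_nonneg K p e x)]
      exact mul_le_mul (hC x ⟨hx.1.le, hx.2.le⟩) (slh_bdd he hR0 hR x) (slh_nonneg K p e x)
          ((norm_nonneg _).trans (hC x ⟨hx.1.le, hx.2.le⟩))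
    · rw [indicator_of_notMem hx, slh_zero (by rwa [hp]), mul_zero, norm_zero]

/-- Payne-Weinberger for functions of one coordinate on a convex set. -/
lemma pw_slice {K : Set E2} (hne : K.Nonempty) (ho : IsOpen K) (hc : Convex ℝ K)
    (hb : Bornology.IsBounded K) (p : E2) {e : E2} (he : ‖e‖ = 1) {L : ℝ}
    (hL : ∀ x ∈ K, ∀ y ∈ K, dist x y ≤ L) {f f' : ℝ → ℝ}
    (hf : ∀ x, HasDerivAt f (f' x) x) (hf'c : Continuous f') :
    (π / L) ^ 2 * ((∫ x in K, f ⟪x - p, rot e⟫ ^ 2) * (volume K).toReal - (∫ x in K, f ⟪x - p, rot e⟫) ^ 2)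
      ≤ (∫ x in K, f' ⟪x - p, rot e⟫ ^ 2) * (volume K).toReal := by
  obtain ⟨R, hR0, hR⟩ := bdd_R hb p
  obtain ⟨a, b, hab, hp⟩ := prj_interval hne ho hc hb p he
  have hfc : Continuous f := continuous_iff_continuousAt.2 fun x => (hf x).continuousAt
  rw [slice_vol ho hb p he, slice_fubini ho hb p he (G := fun s => f s ^ 2) (by fun_prop),
    slice_fubini ho hb p he hfc, slice_fubini ho hb p he (G := fun s => f' s ^ 2) (by fun_prop)]
  refine pw_concave hab ?_ (slh_measurable ho p e) (slh_concave ho hc hb p he hp) ?_ ?_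
    (slh_bdd he hR0 hR) hf hf'c
  · -- width
    have key : ∀ s ∈ Ioo a b, ∀ s' ∈ Ioo a b, s' - s ≤ L := by
      intro s hs s' hs'
      rw [← hp] at hs hs'
      obtain ⟨y, hy⟩ := hs
      obtain ⟨y', hy'⟩ := hs'
      refine le_trans ?_ (hL _ hy' _ hy)
      rw [dist_eq_norm]
      have h1 : ⟪(p + Phi e (s', y')) - (p + Phi e (s, y)), rot e⟫ = s' - s := by
        rw [add_sub_add_left_eq_sub, inner_sub_left, inner_Phi_rot he, inner_Phi_rot he]
      rw [← h1]
      refine (real_inner_le_norm _ _).trans ?_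
      rw [norm_rot, he, mul_one]
    by_contra hlt
    push Not at hlt
    set η := min ((b - a - L) / 4) ((b - a) / 4) with hη
    have hη0 : 0 < η := lt_min (by linarith) (by linarith)
    have h1 : η ≤ (b - a - L) / 4 := min_le_left _ _
    have h2 : η ≤ (b - a) / 4 := min_le_right _ _
    have := key (a + η) ⟨by linarith, by linarith⟩ (b - η) ⟨by linarith, by linarith⟩
    linarith
  · intro x hx; exact slh_pos ho hc hb p he (by rwa [hp])
  · intro x hx; exact slh_zero (by rwa [hp])


def dirv (θ : ℝ) : E2 := !₂[cos θ, sin θ]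

lemma norm_dirv (θ : ℝ) : ‖dirv θ‖ = 1 := by
  have : ‖dirv θ‖ ^ 2 = 1 := by
    rw [normsq_two]; simp [dirv]
  have h0 := norm_nonneg (dirv θ)
  nlinarith

lemma inner_dirv (x : E2) (θ : ℝ) : ⟪x, dirv θ⟫ = x 0 * cos θ + x 1 * sin θ := by
  rw [inner_two]; simp [dirv]

lemma bdd_integrableOn {K : Set E2} (hb : Bornology.IsBounded K) {F : E2 → ℝ} (hF : Continuous F) :
    IntegrableOn F K :=
  IntegrableOn.mono_set (ContinuousOn.integrableOn_compact hb.isCompact_closure hF.continuousOn)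
    subset_closure

def hp (q e : E2) : Set E2 := {x | 0 < ⟪x - q, e⟫}

lemma hp_open (q e : E2) : IsOpen (hp q e) := isOpen_lt (by fun_prop) (by fun_prop)

lemma hp_convex (q e : E2) : Convex ℝ (hp q e) := by
  intro x hx y hy a b ha hb hab
  simp only [hp, mem_setOf_eq] at *
  have : a • x + b • y - q = a • (x - q) + b • (y - q) := by
    have : q = a • q + b • q := by rw [← add_smul, hab, one_smul]
    conv_lhs => rw [this]
    module
  rw [this, inner_add_left, inner_smul_left, inner_smul_left]
  simp only [conj_trivial]
  rcases ha.eq_or_lt with h | h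
  · have hb1 : b = 1 := by linarith
    rw [← h, hb1]; linarith
  · nlinarith [mul_pos h hx, mul_nonneg hb hy.le]

lemma split_int {K : Set E2} (ho : IsOpen K) (hb : Bornology.IsBounded K) (q : E2) {e : E2} (he : ‖e‖ = 1)
    {F : E2 → ℝ} (hF : Continuous F) :
    ∫ x in K, F x = (∫ x in K ∩ hp q e, F x) + ∫ x in K ∩ hp q (-e), F x := by
  rw [← setIntegral_union _ (ho.inter (hp_open q (-e))).measurableSet
    ((bdd_integrableOn hb hF).mono_set inter_subset_left) ((bdd_integrableOn hb hF).mono_set inter_subset_left)]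
  · apply setIntegral_congr_set
    have hnull : volume {x : E2 | ⟪x - q, e⟫ = 0} = 0 := null_line (by rintro rfl; simp at he) q
    have hae : ∀ᵐ x : E2, ⟪x - q, e⟫ ≠ 0 := by
      rw [ae_iff]; simpa using hnull
    filter_upwards [hae] with x hx
    apply propext
    show x ∈ K ↔ x ∈ K ∩ hp q e ∪ K ∩ hp q (-e)
    simp only [hp, mem_union, mem_inter_iff, mem_setOf_eq, inner_neg_right]
    rcases lt_or_gt_of_ne hx with h | h
    · constructor
      · intro h1; right; exact ⟨h1, by linarith⟩
      · rintro (h1 | h1) <;> exact h1.1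
    · constructor
      · intro h1; left; exact ⟨h1, by linarith⟩
      · rintro (h1 | h1) <;> exact h1.1
  · rw [Set.disjoint_left]
    rintro x ⟨_, h1⟩ ⟨_, h2⟩
    simp only [hp, mem_setOf_eq, inner_neg_right] at h1 h2
    linarith

lemma g_cont {K : Set E2} (ho : IsOpen K) (hb : Bornology.IsBounded K) (q : E2)
    {F : E2 → ℝ} (hF : Continuous F) : Continuous fun θ => ∫ x in K ∩ hp q (dirv θ), F x := by
  rw [continuous_iff_continuousAt]
  intro θ
  have e1 : ∀ θ, ∫ x in K ∩ hp q (dirv θ), F x = ∫ x, (K ∩ hp q (dirv θ)).indicator F x := fun θ => by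
    rw [integral_indicator (ho.inter (hp_open q _)).measurableSet]
  simp_rw [e1]
  have hIntg : Integrable (K.indicator fun x => ‖F x‖) :=
    (integrable_indicator_iff ho.measurableSet).2 (bdd_integrableOn hb hF.norm)
  refine continuousAt_of_dominated (bound := K.indicator fun x => ‖F x‖) ?_ ?_ hIntg ?_
  · exact Eventually.of_forall fun θ =>
      (hF.measurable.indicator (ho.inter (hp_open q _)).measurableSet).aestronglyMeasurable
  · refine Eventually.of_forall fun θ => ae_of_all _ fun x => ?_
    by_cases hx : x ∈ K ∩ hp q (dirv θ)
    · rw [indicator_of_mem hx, indicator_of_mem hx.1]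
    · rw [indicator_of_notMem hx, norm_zero]
      exact indicator_nonneg (fun _ _ => norm_nonneg _) _
  · have hnull : volume {x : E2 | ⟪x - q, dirv θ⟫ = 0} = 0 :=
      null_line (by intro h; have := norm_dirv θ; rw [h] at this; simp at this) q
    have hae : ∀ᵐ x : E2, ⟪x - q, dirv θ⟫ ≠ 0 := by
      rw [ae_iff]; simpa using hnull
    filter_upwards [hae] with x hx
    have hc : Continuous fun θ => ⟪x - q, dirv θ⟫ := by
      simp_rw [inner_dirv]; fun_prop
    rcases lt_or_gt_of_ne hx with h | h
    · have : (fun θ' => (K ∩ hp q (dirv θ')).indicator F x) =ᶠ[nhds θ] fun _ => 0 := by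
        filter_upwards [hc.continuousAt.eventually_lt_const h] with θ' hθ'
        rw [indicator_of_notMem]
        rintro ⟨_, h2⟩
        simp only [hp, mem_setOf_eq] at h2
        linarith
      exact continuousAt_const.congr this.symm
    · have : (fun θ' => (K ∩ hp q (dirv θ')).indicator F x) =ᶠ[nhds θ] fun _ => K.indicator F x := by
        filter_upwards [hc.continuousAt.eventually_const_lt h] with θ' hθ'
        by_cases hK : x ∈ K
        · rw [indicator_of_mem hK, indicator_of_mem (show x ∈ K ∩ hp q (dirv θ') from ⟨hK, hθ'⟩)]
        · rw [indicator_of_notMem hK, indicator_of_notMem (fun h => hK h.1)]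
      exact continuousAt_const.congr this.symm

/-- The class of pieces. -/
structure Piece (Ω : Set E2) (u Q : E2 → ℝ) (δ : ℝ) (K : Set E2) : Prop where
  sub : K ⊆ Ω
  op : IsOpen K
  conv : Convex ℝ K
  ne : K.Nonempty
  mean : ∫ x in K, u x = 0
  bad : ∫ x in K, Q x ≤ -δ * volume.real K

lemma ball_vol_pos {ε : ℝ} (hε : 0 < ε) : 0 < volume.real (Metric.ball (0:E2) ε) :=
  ENNReal.toReal_pos (Metric.isOpen_ball.measure_pos _ ⟨0, by simpa using hε⟩).ne'
    (measure_ball_lt_top).ne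

lemma half_loss {K : Set E2} (ho : IsOpen K) (hb : Bornology.IsBounded K) {q e : E2} {ε : ℝ} (hε : 0 < ε)
    (he : ‖e‖ = 1) (hball : Metric.ball q ε ⊆ K) :
    (K ∩ hp q e).Nonempty ∧ 
    volume.real (K ∩ hp q e) ≤ volume.real K - volume.real (Metric.ball (0:E2) (ε/2)) := by
  have hdist : ∀ σ : ℝ, |σ| = 1 → Metric.ball (q + (σ * (ε / 2)) • e) (ε / 2) ⊆ K ∩ hp q (σ • e) := by
    intro σ hσ x hx
    rw [Metric.mem_ball, dist_eq_norm] at hx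
    refine ⟨hball ?_, ?_⟩
    · rw [Metric.mem_ball, dist_eq_norm]
      have : x - q = (x - (q + (σ * (ε / 2)) • e)) + (σ * (ε / 2)) • e := by abel
      rw [this]
      refine (norm_add_le _ _).trans_lt ?_
      rw [norm_smul, he, Real.norm_eq_abs, abs_mul, hσ, abs_of_pos (by linarith : 0 < ε/2)]
      linarith
    · simp only [hp, mem_setOf_eq]
      have h1 : x - q = (x - (q + (σ * (ε / 2)) • e)) + (ε / 2) • (σ • e) := by
        rw [smul_smul, mul_comm (ε/2) σ]; abel
      have hn : ‖σ • e‖ = 1 := by rw [norm_smul, he, Real.norm_eq_abs, hσ, mul_one]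
      rw [h1, inner_add_left, inner_smul_left, real_inner_self_eq_norm_sq, hn]
      have h2 := abs_le.1 (abs_real_inner_le_norm (x - (q + (σ * (ε / 2)) • e)) (σ • e))
      rw [hn, mul_one] at h2
      simp only [conj_trivial]
      linarith [h2.1]
  have hfin : ∀ A ⊆ K, volume A ≠ ⊤ := fun A hA => (hb.subset hA).measure_lt_top.ne
  constructor
  · have := hdist 1 (by simp)
    rw [one_smul] at this
    exact ⟨_, this (Metric.mem_ball_self (by linarith))⟩
  · have h1 := hdist (-1) (by simp)
    have hdisj : Disjoint (K ∩ hp q e) (Metric.ball (q + ((-1) * (ε / 2)) • e) (ε / 2)) := by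
      rw [Set.disjoint_left]
      rintro x ⟨_, h2⟩ h3
      have h4 := (h1 h3).2
      simp only [hp, mem_setOf_eq, neg_smul, one_smul, inner_neg_right] at h2 h4
      linarith
    have h2 : volume.real ((K ∩ hp q e) ∪ Metric.ball (q + ((-1) * (ε / 2)) • e) (ε / 2)) ≤ volume.real K :=
      measureReal_mono (union_subset inter_subset_left (h1.trans inter_subset_left)) (hfin K subset_rfl)
    rw [measureReal_union hdisj Metric.isOpen_ball.measurableSet (hfin _ inter_subset_left)
      (measure_ball_lt_top).ne] at h2
    have h3 : volume.real (Metric.ball (q + ((-1) * (ε / 2)) • e) (ε / 2)) = volume.real (Metric.ball (0:E2) (ε/2)) := by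
      simp only [Measure.real]; rw [Measure.addHaar_ball_center]
    linarith

lemma cut {Ω : Set E2} (hb : Bornology.IsBounded Ω) {u Q : E2 → ℝ} (hu : Continuous u) (hQ : Continuous Q)
    {δ : ℝ} {K : Set E2} (hK : Piece Ω u Q δ K) {q : E2} {ε : ℝ} (hε : 0 < ε) (hball : Metric.ball q ε ⊆ K) :
    ∃ K', Piece Ω u Q δ K' ∧ volume.real K' ≤ volume.real K - volume.real (Metric.ball (0:E2) (ε/2)) := by
  have hKb := hb.subset hK.sub
  set g : ℝ → ℝ := fun θ => ∫ x in K ∩ hp q (dirv θ), u x with hg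
  have hgc : Continuous g := g_cont hK.op hKb q hu
  have hneg : ∀ θ, dirv (θ + π) = - dirv θ := fun θ => by
    ext i; fin_cases i <;> simp [dirv]
  have hgpi : g π = - g 0 := by
    have h1 := split_int hK.op hKb q (norm_dirv 0) hu
    rw [← hneg, zero_add, hK.mean] at h1
    simp only [hg]
    linarith
  obtain ⟨θ, hθ⟩ : ∃ θ, g θ = 0 := by
    rcases le_total (g 0) 0 with h | h
    · exact mem_range_of_exists_le_of_exists_ge hgc ⟨0, h⟩ ⟨π, by linarith⟩
    · exact mem_range_of_exists_le_of_exists_ge hgc ⟨π, by linarith⟩ ⟨0, h⟩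
  have he := norm_dirv θ
  have he' : ‖-dirv θ‖ = 1 := by rw [norm_neg, he]
  have m1 : ∫ x in K ∩ hp q (dirv θ), u x = 0 := hθ
  have m2 : ∫ x in K ∩ hp q (-dirv θ), u x = 0 := by
    have h1 := split_int hK.op hKb q he hu
    rw [hK.mean, m1] at h1; linarith
  have sQ := split_int hK.op hKb q he hQ
  have sV := split_int hK.op hKb q he (F := fun _ => 1) continuous_const
  simp only [setIntegral_const, smul_eq_mul, mul_one] at sV
  have hbad := hK.bad
  obtain ⟨n1, l1⟩ := half_loss hK.op hKb hε he hball
  obtain ⟨n2, l2⟩ := half_loss hK.op hKb hε he' hball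
  by_cases hc : ∫ x in K ∩ hp q (dirv θ), Q x ≤ -δ * volume.real (K ∩ hp q (dirv θ))
  · exact ⟨_, ⟨inter_subset_left.trans hK.sub, hK.op.inter (hp_open _ _), hK.conv.inter (hp_convex _ _), n1, m1, hc⟩, l1⟩
  · refine ⟨_, ⟨inter_subset_left.trans hK.sub, hK.op.inter (hp_open _ _), hK.conv.inter (hp_convex _ _), n2, m2, ?_⟩, l2⟩
    push Not at hc
    rw [sQ, sV] at hbad
    nlinarith

lemma thin {Ω : Set E2} (hb : Bornology.IsBounded Ω) {u Q : E2 → ℝ} (hu : Continuous u) (hQ : Continuous Q)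
    {δ : ℝ} (hΩ : Piece Ω u Q δ Ω) {ε : ℝ} (hε : 0 < ε) :
    ∃ K, Piece Ω u Q δ K ∧ ∀ q, ¬ Metric.ball q ε ⊆ K := by
  by_contra hcon
  push Not at hcon
  set S := {v | ∃ K, Piece Ω u Q δ K ∧ v = volume.real K} with hS
  have hSb : BddBelow S := ⟨0, by rintro v ⟨K, _, rfl⟩; exact measureReal_nonneg⟩
  have hSn : S.Nonempty := ⟨_, Ω, hΩ, rfl⟩
  have hv := ball_vol_pos (show 0 < ε / 2 by linarith)
  obtain ⟨v, ⟨K, hK, rfl⟩, hlt⟩ := exists_lt_of_csInf_lt hSn (show sInf S < sInf S + volume.real (Metric.ball (0:E2) (ε/2)) by linarith)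
  obtain ⟨q, hq⟩ := hcon K hK
  obtain ⟨K', hK', hle⟩ := cut hb hu hQ hK hε hq
  have := csInf_le hSb ⟨K', hK', rfl⟩
  linarith


lemma big_index {w : Fin 3 → ℝ} (hws : ∑ i, w i = 1) : ∃ i, 1 / 3 ≤ w i := by
  by_contra h
  push Not at h
  rw [Fin.sum_univ_three] at hws
  linarith [h 0, h 1, h 2]

lemma strip_width {w : Fin 3 → ℝ} {e : Fin 3 → E2} (hw : ∀ i, 0 ≤ w i) (hws : ∑ i, w i = 1)
    (hw0 : ∑ i, w i • e i = 0) {x p : E2} {r : ℝ} (hx : ∀ i, ⟪x - p, e i⟫ < r) (i : Fin 3) :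
    - (r * (1 - w i)) ≤ w i * ⟪x - p, e i⟫ := by
  have h1 : ∑ j, w j * ⟪x - p, e j⟫ = 0 := by
    have := congrArg (fun z => ⟪x - p, z⟫) hw0
    simpa [inner_sum, inner_smul_right] using this
  rw [Fin.sum_univ_three] at h1 hws
  have h2 : ∀ j, w j * ⟪x - p, e j⟫ ≤ w j * r := fun j => mul_le_mul_of_nonneg_left (hx j).le (hw j)
  have a := h2 0
  have b := h2 1
  have c := h2 2
  fin_cases i <;> simp only [Fin.zero_eta, Fin.mk_one, Fin.reduceFinMk] <;> nlinarith

set_option maxHeartbeats 2000000 in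
/-- Payne-Weinberger. -/
lemma payne_weinberger {Ω : Set E2} (hne : Ω.Nonempty) (ho : IsOpen Ω) (hb : Bornology.IsBounded Ω)
    (hc : Convex ℝ Ω) {D : ℝ} (hD : 0 < D) (hDd : ∀ x ∈ Ω, ∀ y ∈ Ω, dist x y ≤ D) {u : E2 → ℝ}
    (hu : ContDiff ℝ 1 u) (hmean : ∫ x in Ω, u x = 0) :
    (π / D) ^ 2 * ∫ x in Ω, u x ^ 2 ≤ ∫ x in Ω, ‖fderiv ℝ u x‖ ^ 2 := by
  by_contra hlt
  push Not at hlt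
  have huc : Continuous u := hu.continuous
  have huf : Continuous (fderiv ℝ u) := hu.continuous_fderiv (by norm_num)
  set c := (π / D) ^ 2 with hcdef
  have hc0 : 0 ≤ c := sq_nonneg _
  set Q : E2 → ℝ := fun x => ‖fderiv ℝ u x‖ ^ 2 - c * u x ^ 2 with hQ
  have hQc : Continuous Q := by fun_prop
  have hQint : ∀ K ⊆ Ω, ∫ x in K, Q x = (∫ x in K, ‖fderiv ℝ u x‖ ^ 2) - c * ∫ x in K, u x ^ 2 := by
    intro K hK
    have hKb := hb.subset hK
    rw [← integral_const_mul, ← integral_sub]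
    · exact bdd_integrableOn hKb (F := fun x => ‖fderiv ℝ u x‖ ^ 2) (by fun_prop)
    · exact bdd_integrableOn hKb (F := fun x => c * u x ^ 2) (by fun_prop)
  have hvol : ∀ K ⊆ Ω, IsOpen K → K.Nonempty → 0 < volume.real K := fun K hK hKo hKn =>
    ENNReal.toReal_pos (hKo.measure_pos _ hKn).ne' (hb.subset hK).measure_lt_top.ne
  have hA := hvol Ω subset_rfl ho hne
  set δ := -(∫ x in Ω, Q x) / volume.real Ω with hδ
  have hδ0 : 0 < δ := by
    apply div_pos _ hA
    rw [hQint Ω subset_rfl]; linarith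
  have hΩ : Piece Ω u Q δ Ω := ⟨subset_rfl, ho, hc, hne, hmean, by
    rw [hδ]; field_simp; exact le_rfl⟩
  obtain ⟨R, hR0, hR⟩ := bdd_R hb 0
  set B := Metric.closedBall (0:E2) (R + 2) with hB
  have hBc : IsCompact B := isCompact_closedBall _ _
  obtain ⟨B1, hB1⟩ := hBc.exists_bound_of_continuousOn huc.continuousOn
  obtain ⟨B2, hB2⟩ := hBc.exists_bound_of_continuousOn huf.continuousOn
  set M := max B1 B2 with hM
  have h0B : (0:E2) ∈ B := by simp [hB]; linarith
  have hM0 : 0 ≤ M := (norm_nonneg _).trans ((hB1 0 h0B).trans (le_max_left _ _))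
  set η := min 1 (δ / (2 * ((c + 1) * (2 * M + 1)))) with hη
  have hden : 0 < 2 * ((c + 1) * (2 * M + 1)) := by positivity
  have hη0 : 0 < η := lt_min one_pos (div_pos hδ0 hden)
  have hη1 : η ≤ 1 := min_le_left _ _
  have hη2 : η * (2 * ((c + 1) * (2 * M + 1))) ≤ δ := by
    rw [← le_div_iff₀ hden]; exact min_le_right _ _
  obtain ⟨ε1, hε1, hu1⟩ := Metric.uniformContinuousOn_iff.1
    (hBc.uniformContinuousOn_of_continuous huc.continuousOn) η hη0
  obtain ⟨ε2, hε2, hu2⟩ := Metric.uniformContinuousOn_iff.1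
    (hBc.uniformContinuousOn_of_continuous huf.continuousOn) η hη0
  set ε := min 1 (min (ε1 / 2) (ε2 / 2)) with hε
  have hε0 : 0 < ε := lt_min one_pos (lt_min (by linarith) (by linarith))
  have hεa : ε ≤ 1 := min_le_left _ _
  have hεb : ε ≤ ε1 / 2 := (min_le_right _ _).trans (min_le_left _ _)
  have hεc : ε ≤ ε2 / 2 := (min_le_right _ _).trans (min_le_right _ _)
  obtain ⟨K, hK, hKthin⟩ := thin hb huc hQc hΩ hε0
  have hKb := hb.subset hK.sub
  have hKv := hvol K hK.sub hK.op hK.ne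
  obtain ⟨p, r, w, e, hr, hball, he, hs, hw, hws, hw0⟩ := incircle3 hK.ne hK.op hKb hK.conv
  have hrε : r < ε := by
    by_contra h
    push Not at h
    exact hKthin p ((Metric.ball_subset_ball h).trans hball)
  obtain ⟨i, hi⟩ := big_index hws
  have hei := he i
  have hstrip : ∀ x ∈ K, |⟪x - p, e i⟫| < 2 * ε := by
    intro x hx
    have h1 := strip_width hw hws hw0 (fun j => hs j x hx) i
    have h2 := hs i x hx
    rw [abs_lt]
    refine ⟨?_, by linarith⟩
    by_contra h3
    push Not at h3
    nlinarith
  set f : ℝ → ℝ := fun s => u (p + s • rot (e i)) with hf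
  set f' : ℝ → ℝ := fun s => fderiv ℝ u (p + s • rot (e i)) (rot (e i)) with hf'
  have hfd : ∀ s, HasDerivAt f (f' s) s := by
    intro s
    have h1 : HasDerivAt (fun s : ℝ => p + s • rot (e i)) (rot (e i)) s := by
      simpa using ((hasDerivAt_id s).smul_const (rot (e i))).const_add p
    exact ((hu.differentiable (by norm_num)) _).hasFDerivAt.comp_hasDerivAt s h1
  have hf'c : Continuous f' := by
    simp only [hf']
    exact (huf.comp (by fun_prop)).clm_apply continuous_const
  have hfc : Continuous f := by simp only [hf]; fun_prop
  have hpw := pw_slice hK.ne hK.op hK.conv hKb p hei (fun x hx y hy => hDd x (hK.sub hx) y (hK.sub hy)) hfd hf'c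
  -- comparison
  have hcmp : ∀ x ∈ K, |f ⟪x - p, rot (e i)⟫ - u x| ≤ η ∧
      f' ⟪x - p, rot (e i)⟫ ^ 2 ≤ ‖fderiv ℝ u x‖ ^ 2 + (2 * M * η + η ^ 2) ∧
      u x ^ 2 - 2 * M * η ≤ f ⟪x - p, rot (e i)⟫ ^ 2 := by
    intro x hx
    set y := p + ⟪x - p, rot (e i)⟫ • rot (e i) with hy
    have hxy : ‖x - y‖ < 2 * ε := by
      have h1 : x - y = ⟪x - p, e i⟫ • e i := by
        have h2 := Psi_inner hei p x
        simp only [Phi] at h2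
        rw [hy]
        nth_rewrite 1 [← h2]
        abel
      rw [h1, norm_smul, hei, mul_one]
      exact hstrip x hx
    have hxR : ‖x‖ ≤ R := by simpa using hR x (hK.sub hx)
    have hxB : x ∈ B := by rw [hB, mem_closedBall_zero_iff]; linarith
    have hyB : y ∈ B := by
      rw [hB, mem_closedBall_zero_iff]
      have : ‖y‖ ≤ ‖x‖ + ‖x - y‖ := by
        have := norm_sub_le x (x - y)
        simpa using this
      linarith
    have d1 := hu1 x hxB y hyB (by rw [dist_eq_norm]; linarith)
    have d2 := hu2 x hxB y hyB (by rw [dist_eq_norm]; linarith)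
    rw [dist_eq_norm] at d1 d2
    have e1 : f ⟪x - p, rot (e i)⟫ = u y := rfl
    have e2 : |f' ⟪x - p, rot (e i)⟫| ≤ ‖fderiv ℝ u y‖ := by
      have := (fderiv ℝ u y).le_opNorm (rot (e i))
      rwa [norm_rot, hei, mul_one] at this
    have e3 : ‖fderiv ℝ u y‖ ≤ ‖fderiv ℝ u x‖ + η := by
      have : ‖fderiv ℝ u y‖ ≤ ‖fderiv ℝ u x‖ + ‖fderiv ℝ u x - fderiv ℝ u y‖ := by
        have := norm_sub_le (fderiv ℝ u x) (fderiv ℝ u x - fderiv ℝ u y)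
        simpa using this
      linarith
    have e4 : ‖fderiv ℝ u x‖ ≤ M := (hB2 x hxB).trans (le_max_right _ _)
    have e5 : |u x| ≤ M := (hB1 x hxB).trans (le_max_left _ _)
    rw [Real.norm_eq_abs] at d1
    refine ⟨?_, ?_, ?_⟩
    · rw [e1, abs_sub_comm]; exact d1.le
    · have h0 := norm_nonneg (fderiv ℝ u x)
      have h1 : f' ⟪x - p, rot (e i)⟫ ^ 2 ≤ (‖fderiv ℝ u x‖ + η) ^ 2 := by
        rw [← sq_abs]
        exact pow_le_pow_left₀ (abs_nonneg _) (e2.trans e3) 2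
      nlinarith
    · rw [e1]
      have h1 : |u x| * |u x - u y| ≤ M * η := mul_le_mul e5 d1.le (abs_nonneg _) hM0
      rw [← abs_mul] at h1
      have h2 := (abs_le.1 h1).2
      have h3 := sq_nonneg (u x - u y)
      linarith [show u y ^ 2 = u x ^ 2 - 2 * (u x * (u x - u y)) + (u x - u y) ^ 2 by ring]
  have hmK := hK.op.measurableSet
  have hcst : ∀ z : ℝ, ∫ x in K, z = z * volume.real K := fun z => by
    rw [setIntegral_const, smul_eq_mul, mul_comm]
  have I1 : |∫ x in K, f ⟪x - p, rot (e i)⟫| ≤ η * volume.real K := by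
    have h1 : ∫ x in K, f ⟪x - p, rot (e i)⟫ = ∫ x in K, (f ⟪x - p, rot (e i)⟫ - u x) := by
      rw [integral_sub, hK.mean, sub_zero]
      · exact bdd_integrableOn hKb (F := fun x => f ⟪x - p, rot (e i)⟫) (by fun_prop)
      · exact bdd_integrableOn hKb huc
    rw [h1]
    have hbnd : ∀ x ∈ K, ‖f ⟪x - p, rot (e i)⟫ - u x‖ ≤ η := fun x hx => (hcmp x hx).1
    exact norm_setIntegral_le_of_norm_le_const hKb.measure_lt_top hbnd
  have I2 : ∫ x in K, f' ⟪x - p, rot (e i)⟫ ^ 2 ≤ (∫ x in K, ‖fderiv ℝ u x‖ ^ 2) + (2 * M * η + η ^ 2) * volume.real K := by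
    rw [← hcst, ← integral_add]
    · refine setIntegral_mono_on ?_ ?_ hmK (fun x hx => (hcmp x hx).2.1)
      · exact bdd_integrableOn hKb (F := fun x => f' ⟪x - p, rot (e i)⟫ ^ 2) (by fun_prop)
      · exact bdd_integrableOn hKb (F := fun x => ‖fderiv ℝ u x‖ ^ 2 + (2 * M * η + η ^ 2)) (by fun_prop)
    · exact bdd_integrableOn hKb (F := fun x => ‖fderiv ℝ u x‖ ^ 2) (by fun_prop)
    · exact bdd_integrableOn hKb (F := fun x => (2 * M * η + η ^ 2)) (by fun_prop)
  have I3 : (∫ x in K, u x ^ 2) - 2 * M * η * volume.real K ≤ ∫ x in K, f ⟪x - p, rot (e i)⟫ ^ 2 := by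
    rw [← hcst, ← integral_sub]
    · refine setIntegral_mono_on ?_ ?_ hmK (fun x hx => (hcmp x hx).2.2)
      · exact bdd_integrableOn hKb (F := fun x => u x ^ 2 - 2 * M * η) (by fun_prop)
      · exact bdd_integrableOn hKb (F := fun x => f ⟪x - p, rot (e i)⟫ ^ 2) (by fun_prop)
    · exact bdd_integrableOn hKb (F := fun x => u x ^ 2) (by fun_prop)
    · exact bdd_integrableOn hKb (F := fun x => 2 * M * η) (by fun_prop)
  have hbad := hK.bad
  rw [hQint K hK.sub] at hbad
  rw [← hcdef] at hpw
  change c * ((∫ x in K, f ⟪x - p, rot (e i)⟫ ^ 2) * volume.real K - (∫ x in K, f ⟪x - p, rot (e i)⟫) ^ 2)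
    ≤ (∫ x in K, f' ⟪x - p, rot (e i)⟫ ^ 2) * volume.real K at hpw
  set V := volume.real K
  have I4 : (∫ x in K, f ⟪x - p, rot (e i)⟫) ^ 2 ≤ (η * V) ^ 2 := by
    rw [← sq_abs]; exact pow_le_pow_left₀ (abs_nonneg _) I1 2
  generalize (∫ x in K, f ⟪x - p, rot (e i)⟫) ^ 2 = a1 at *
  generalize (∫ x in K, f ⟪x - p, rot (e i)⟫ ^ 2) = a2 at *
  generalize (∫ x in K, f' ⟪x - p, rot (e i)⟫ ^ 2) = a3 at *
  generalize (∫ x in K, ‖fderiv ℝ u x‖ ^ 2) = a4 at *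
  generalize (∫ x in K, u x ^ 2) = a5 at *
  have s1 : c * ((a5 - 2 * M * η * V) * V - (η * V) ^ 2) ≤ (a4 + (2 * M * η + η ^ 2) * V) * V := by
    refine le_trans ?_ (hpw.trans (mul_le_mul_of_nonneg_right I2 hKv.le))
    apply mul_le_mul_of_nonneg_left _ hc0
    have := mul_le_mul_of_nonneg_right I3 hKv.le
    linarith
  have s2 : (c * a5 - a4) * V ≤ ((c + 1) * (2 * M * η + η ^ 2) * V) * V := by linarith
  have s3 := le_of_mul_le_mul_right s2 hKv
  have s4 : δ * V ≤ (c + 1) * (2 * M * η + η ^ 2) * V := by linarith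
  have s5 := le_of_mul_le_mul_right s4 hKv
  have s6 : (c + 1) * (2 * M * η + η ^ 2) ≤ η * ((c + 1) * (2 * M + 1)) := by
    have : η ^ 2 ≤ η := by nlinarith
    have : (c + 1) * (2 * M * η + η ^ 2) ≤ (c + 1) * (2 * M * η + η) := by
      apply mul_le_mul_of_nonneg_left <;> linarith
    linarith
  linarith


lemma int_lt_of_le {f g : ℝ → ℝ} (hf : Integrable f) (hg : Integrable g)
    (hle : ∀ᵐ x, f x ≤ g x) (hlt : volume {x | f x < g x} ≠ 0) : ∫ x, f x < ∫ x, g x := by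
  have h1 : 0 < ∫ x, (g x - f x) := by
    refine (integral_pos_iff_support_of_nonneg_ae (f := fun x => g x - f x)
      (hle.mono fun x hx => by simpa using hx) (hg.sub hf)).2 ?_
    refine lt_of_lt_of_le (pos_iff_ne_zero.2 hlt) (measure_mono ?_)
    intro x hx
    exact (sub_pos.2 hx).ne'
  rw [integral_sub hg hf] at h1
  linarith

lemma rot_neg_rot (v : E2) : rot (-rot v) = v := by
  ext i; fin_cases i <;> simp [rot]

lemma slh_ball {Ω : Set E2} (hb : Bornology.IsBounded Ω) {p e : E2} (he : ‖e‖ = 1) {r s : ℝ} (hr : 0 < r)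
    (hball : Metric.ball p r ⊆ Ω) : 2 * √(r ^ 2 - s ^ 2) ≤ slh Ω p e s := by
  have : √(r ^ 2 - s ^ 2) - (-√(r ^ 2 - s ^ 2)) ≤ slh Ω p e s := by
    apply le_slh he hb
    intro y hy
    apply hball
    rw [Metric.mem_ball, dist_eq_norm, add_sub_cancel_left]
    have h1 := norm_Phi_sq he (s, y)
    simp only at h1
    have h2 : |y| < √(r ^ 2 - s ^ 2) := abs_lt.2 hy
    have h3 : y ^ 2 < r ^ 2 - s ^ 2 := by
      rw [← sq_abs]; exact (Real.lt_sqrt (abs_nonneg y)).1 h2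
    refine lt_of_pow_lt_pow_left₀ 2 hr.le ?_
    linarith
  linarith

lemma tent_int {a b : ℝ} (ha : a < 0) (hb : 0 < b) (r : ℝ) :
    ∫ s in a..b, 2 * r * (1 - max (s / b) (s / a)) = r * (b - a) := by
  have hc : Continuous fun s : ℝ => 2 * r * (1 - max (s / b) (s / a)) := by fun_prop
  rw [← intervalIntegral.integral_add_adjacent_intervals (hc.intervalIntegrable a 0) (hc.intervalIntegrable 0 b)]
  have e1 : ∫ s in a..0, 2 * r * (1 - max (s / b) (s / a)) = ∫ s in a..0, (2 * r - 2 * r / a * s) := by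
    apply intervalIntegral.integral_congr
    intro s hs
    rw [uIcc_of_le ha.le] at hs
    have h1 : s / b ≤ 0 := div_nonpos_of_nonpos_of_nonneg hs.2 hb.le
    have h2 : 0 ≤ s / a := div_nonneg_of_nonpos hs.2 ha.le
    simp only [max_eq_right (h1.trans h2)]; ring
  have e2 : ∫ s in (0:ℝ)..b, 2 * r * (1 - max (s / b) (s / a)) = ∫ s in (0:ℝ)..b, (2 * r - 2 * r / b * s) := by
    apply intervalIntegral.integral_congr
    intro s hs
    rw [uIcc_of_le hb.le] at hs
    have h1 : s / a ≤ 0 := div_nonpos_of_nonneg_of_nonpos hs.1 ha.le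
    have h2 : 0 ≤ s / b := div_nonneg hs.1 hb.le
    simp only [max_eq_left (h1.trans h2)]; ring
  have hIntg : ∀ c d k : ℝ, IntervalIntegrable (fun s : ℝ => k * s) volume c d := fun c d k =>
    (by fun_prop : Continuous fun s : ℝ => k * s).intervalIntegrable _ _
  rw [e1, e2, intervalIntegral.integral_sub (by simp) (hIntg _ _ _), intervalIntegral.integral_sub (by simp) (hIntg _ _ _)]
  have hid : ∀ c d k : ℝ, ∫ s in c..d, k * s = k * ((d ^ 2 - c ^ 2) / 2) := fun c d k => by
    rw [intervalIntegral.integral_const_mul, integral_id]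
  rw [hid, hid]
  simp only [intervalIntegral.integral_const, smul_eq_mul]
  have := ha.ne
  field_simp
  ring

lemma concave_tent {a b : ℝ} (ha : a < 0) (hb : 0 < b) {h : ℝ → ℝ} (hc : ConcaveOn ℝ (Ioo a b) h)
    (h0 : ∀ x, 0 ≤ h x) {m : ℝ} (hm : 0 ≤ m) (hm0 : m ≤ h 0) {s : ℝ} (hs : s ∈ Ioo a b) :
    m * (1 - max (s / b) (s / a)) ≤ h s := by
  have h00 : (0:ℝ) ∈ Ioo a b := ⟨ha, hb⟩
  have key : ∀ c ∈ Ioo a b, c ≠ 0 → 0 ≤ s / c → s / c ≤ 1 → m * (1 - s / c) ≤ h s := by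
    intro c hcm hc0 h1 h2
    have := hc.2 hcm h00 h1 (show 0 ≤ 1 - s / c by linarith) (by ring)
    simp only [smul_eq_mul, mul_zero, add_zero, div_mul_cancel₀ s hc0] at this
    have h3 := mul_nonneg h1 (h0 c)
    have h4 := mul_le_mul_of_nonneg_left hm0 (show 0 ≤ 1 - s / c by linarith)
    linarith
  rcases le_total 0 s with hs0 | hs0
  · have h1 : s / a ≤ 0 := div_nonpos_of_nonneg_of_nonpos hs0 ha.le
    have h2 : 0 ≤ s / b := div_nonneg hs0 hb.le
    rw [max_eq_left (h1.trans h2)]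
    have hl : Tendsto (fun c => m * (1 - s / c)) (nhdsWithin b (Iio b)) (nhds (m * (1 - s / b))) := by
      have : ContinuousAt (fun c => m * (1 - s / c)) b := by
        have := hb.ne'
        fun_prop (disch := assumption)
      exact this.tendsto.mono_left nhdsWithin_le_nhds
    refine le_of_tendsto hl ?_
    filter_upwards [Ioo_mem_nhdsLT hs.2] with c hcm
    have hcp : 0 < c := by linarith [hcm.1]
    exact key c ⟨by linarith, hcm.2⟩ hcp.ne' (div_nonneg hs0 hcp.le) (by rw [div_le_one hcp]; exact hcm.1.le)
  · have h1 : s / b ≤ 0 := div_nonpos_of_nonpos_of_nonneg hs0 hb.le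
    have h2 : 0 ≤ s / a := div_nonneg_of_nonpos hs0 ha.le
    rw [max_eq_right (h1.trans h2)]
    have hl : Tendsto (fun c => m * (1 - s / c)) (nhdsWithin a (Ioi a)) (nhds (m * (1 - s / a))) := by
      have : ContinuousAt (fun c => m * (1 - s / c)) a := by
        have := ha.ne
        fun_prop (disch := assumption)
      exact this.tendsto.mono_left nhdsWithin_le_nhds
    refine le_of_tendsto hl ?_
    filter_upwards [Ioo_mem_nhdsGT hs.1] with c hcm
    have hcp : c < 0 := by linarith [hcm.2]
    exact key c ⟨hcm.1, by linarith⟩ hcp.ne (div_nonneg_of_nonpos hs0 hcp.le)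
      (by rw [div_le_one_of_neg hcp]; exact hcm.2.le)

lemma diam_pts {Ω : Set E2} (hne : Ω.Nonempty) (hb : Bornology.IsBounded Ω) :
    ∃ P P', P ∈ closure Ω ∧ P' ∈ closure Ω ∧ ∀ x ∈ Ω, ∀ y ∈ Ω, dist x y ≤ dist P P' := by
  have hcomp : IsCompact (closure Ω ×ˢ closure Ω) := hb.isCompact_closure.prod hb.isCompact_closure
  obtain ⟨z, hz, hmax⟩ := hcomp.exists_isMaxOn (hne.closure.prod hne.closure)
    (f := fun z : E2 × E2 => dist z.1 z.2) continuous_dist.continuousOn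
  rw [isMaxOn_iff] at hmax
  refine ⟨z.1, z.2, hz.1, hz.2, fun x hx y hy => ?_⟩
  exact hmax (x, y) (Set.mk_mem_prod (subset_closure hx) (subset_closure hy))

lemma area_lb {Ω : Set E2} (hne : Ω.Nonempty) (ho : IsOpen Ω) (hb : Bornology.IsBounded Ω)
    (hc : Convex ℝ Ω) {p : E2} {r : ℝ} (hr : 0 < r) (hball : Metric.ball p r ⊆ Ω) :
    ∃ D, 0 < D ∧ (∀ x ∈ Ω, ∀ y ∈ Ω, dist x y ≤ D) ∧ r * D < volume.real Ω := by
  obtain ⟨P, P', hP, hP', hDd⟩ := diam_pts hne hb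
  have hD : 0 < dist P P' := by
    have h1 : p + (r / 2) • dirv 0 ∈ Ω := hball (by
      rw [Metric.mem_ball, dist_eq_norm, add_sub_cancel_left, norm_smul, norm_dirv, mul_one,
        Real.norm_of_nonneg (by linarith)]; linarith)
    have h2 := hDd _ h1 p (hball (Metric.mem_ball_self hr))
    rw [dist_eq_norm, add_sub_cancel_left, norm_smul, norm_dirv, mul_one,
        Real.norm_of_nonneg (by linarith)] at h2
    linarith
  refine ⟨dist P P', hD, hDd, ?_⟩
  set D := dist P P' with hDdef
  set v : E2 := D⁻¹ • (P' - P) with hv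
  have hvn : ‖P' - P‖ = D := by rw [hDdef, dist_comm, dist_eq_norm]
  have hv1 : ‖v‖ = 1 := by
    rw [hv, norm_smul, hvn, norm_inv, Real.norm_of_nonneg hD.le, inv_mul_cancel₀ hD.ne']
  set e : E2 := -rot v with he'
  have he : ‖e‖ = 1 := by rw [he', norm_neg, norm_rot, hv1]
  have hre : rot e = v := rot_neg_rot v
  obtain ⟨a, b, hab, hp⟩ := prj_interval hne ho hc hb p he
  have hcl : ∀ x ∈ closure Ω, ⟪x - p, rot e⟫ ∈ Icc a b := by
    intro x hx
    have h1 : MapsTo (fun x => ⟪x - p, rot e⟫) Ω (Icc a b) := by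
      intro y hy
      have : ⟪y - p, rot e⟫ ∈ prj Ω p e := ⟨⟪y - p, e⟫, by rwa [Psi_inner he]⟩
      rw [hp] at this
      exact Ioo_subset_Icc_self this
    have h2 := h1.closure (by fun_prop) hx
    rwa [isClosed_Icc.closure_eq] at h2
  have hwid : D ≤ b - a := by
    have h1 := (hcl P hP).1
    have h2 := (hcl P' hP').2
    have h3 : ⟪P' - p, rot e⟫ - ⟪P - p, rot e⟫ = D := by
      rw [← inner_sub_left, sub_sub_sub_cancel_right, hre, hv, inner_smul_right,
        real_inner_self_eq_norm_sq, hvn]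
      field_simp
    linarith
  have h0mem : (0:ℝ) ∈ Ioo a b := by
    rw [← hp]
    refine ⟨0, ?_⟩
    have : Phi e (0, 0) = 0 := by simp [Phi]
    rw [this, add_zero]
    exact hball (Metric.mem_ball_self hr)
  obtain ⟨ha0, hb0⟩ := h0mem
  set h := slh Ω p e with hh
  have hbl : ∀ s, 2 * √(r ^ 2 - s ^ 2) ≤ h s := fun s => slh_ball hb he hr hball
  have hh0 : 2 * r ≤ h 0 := by
    have := hbl 0
    simpa [Real.sqrt_sq hr.le] using this
  have hconc := slh_concave ho hc hb p he hp
  set T : ℝ → ℝ := (Ioc a b).indicator fun s => 2 * r * (1 - max (s / b) (s / a)) with hT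
  have hTi : ∫ s, T s = r * (b - a) := by
    rw [hT, integral_indicator measurableSet_Ioc, ← intervalIntegral.integral_of_le hab.le, tent_int ha0 hb0]
  have hTint : Integrable T := by
    rw [hT, integrable_indicator_iff measurableSet_Ioc]
    have : Continuous fun s : ℝ => 2 * r * (1 - max (s / b) (s / a)) := by fun_prop
    exact (this.integrableOn_Icc).mono_set Ioc_subset_Icc_self
  have hhint : Integrable h := by
    have := slh_integrable hne ho hc hb p he (G := fun _ => 1) continuous_const
    simpa using this
  have hTle : ∀ s, T s ≤ h s := by
    intro s
    by_cases hs : s ∈ Ioo a b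
    · rw [hT, indicator_of_mem (Ioo_subset_Ioc_self hs)]
      exact concave_tent ha0 hb0 hconc (slh_nonneg Ω p e) (by linarith) hh0 hs
    · by_cases hs' : s ∈ Ioc a b
      · have : s = b := by
          by_contra hsb
          exact hs ⟨hs'.1, lt_of_le_of_ne hs'.2 hsb⟩
        rw [hT, indicator_of_mem hs']
        have h1 : s / b = 1 := by rw [this, div_self hb0.ne']
        have h2 : 1 ≤ max (s / b) (s / a) := h1 ▸ le_max_left _ _
        have h3 : 2 * r * (1 - max (s / b) (s / a)) ≤ 0 := mul_nonpos_of_nonneg_of_nonpos (by linarith) (by linarith)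
        exact h3.trans (slh_nonneg Ω p e s)
      · rw [hT, indicator_of_notMem hs']; exact slh_nonneg Ω p e s
  have hlt : ∫ s, T s < ∫ s, h s := by
    refine int_lt_of_le hTint hhint (ae_of_all _ hTle) ?_
    set s0 := min r (min b (2 * b * r ^ 2 / (b ^ 2 + r ^ 2))) with hs0
    have hs0p : 0 < s0 := lt_min hr (lt_min hb0 (by positivity))
    have hsub : Ioo 0 s0 ⊆ {s | T s < h s} := by
      intro s hs
      have h1 : s < r := hs.2.trans_le (min_le_left _ _)
      have h2 : s < b := hs.2.trans_le ((min_le_right _ _).trans (min_le_left _ _))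
      have h3 : s < 2 * b * r ^ 2 / (b ^ 2 + r ^ 2) := hs.2.trans_le ((min_le_right _ _).trans (min_le_right _ _))
      rw [lt_div_iff₀ (by positivity)] at h3
      have hsp := hs.1
      show T s < h s
      rw [hT, indicator_of_mem (show s ∈ Ioc a b from ⟨by linarith, h2.le⟩)]
      have h4 : s / a ≤ 0 := div_nonpos_of_nonneg_of_nonpos hsp.le ha0.le
      have h5 : 0 ≤ s / b := div_nonneg hsp.le hb0.le
      rw [max_eq_left (h4.trans h5)]
      refine lt_of_lt_of_le ?_ (hbl s)
      have h6 : r * (1 - s / b) < √(r ^ 2 - s ^ 2) := by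
        apply Real.lt_sqrt_of_sq_lt
        have : r * (1 - s / b) = r * (b - s) / b := by field_simp
        rw [this, div_pow, div_lt_iff₀ (by positivity)]
        nlinarith
      linarith
    have := measure_mono hsub (μ := volume)
    rw [Real.volume_Ioo] at this
    intro h0
    rw [h0] at this
    simp at this
    linarith
  have hvol : volume.real Ω = ∫ s, h s := slice_vol ho hb p he
  rw [hvol]
  rw [hTi] at hlt
  exact lt_of_le_of_lt (mul_le_mul_of_nonneg_left hwid hr.le) hlt


def clp (l x : ℝ) : ℝ := max (-l) (min l x)

lemma clp_cont (l : ℝ) : Continuous (clp l) := by unfold clp; fun_prop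

lemma clp_mid {l x : ℝ} (h1 : -l ≤ x) (h2 : x ≤ l) : clp l x = x := by
  rw [clp, min_eq_right h2, max_eq_right h1]

lemma clp_hi {l x : ℝ} (hl : 0 ≤ l) (h2 : l ≤ x) : clp l x = l := by
  rw [clp, min_eq_left h2, max_eq_right (by linarith)]

lemma clp_lo {l x : ℝ} (hl : 0 ≤ l) (h2 : x ≤ -l) : clp l x = -l := by
  rw [clp, min_eq_right (by linarith), max_eq_left h2]

lemma clp_prim {k l : ℝ} (hk : 0 < k) (hl : 0 < l) (hkl : k * l = π / 2) (y x : ℝ) :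
    ∫ t in y..x, k * cos (k * clp l t) = sin (k * clp l x) - sin (k * clp l y) := by
  have hc : Continuous fun t => k * cos (k * clp l t) := by have := clp_cont l; fun_prop
  have hii := fun c d : ℝ => hc.intervalIntegrable (μ := volume) c d
  have key : ∀ x, ∫ t in (0:ℝ)..x, k * cos (k * clp l t) = sin (k * clp l x) := by
    have mid : ∀ x, -l ≤ x → x ≤ l → ∫ t in (0:ℝ)..x, k * cos (k * clp l t) = sin (k * clp l x) := by
      intro x h1 h2
      have e1 : ∫ t in (0:ℝ)..x, k * cos (k * clp l t) = ∫ t in (0:ℝ)..x, k * cos (k * t) := by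
        apply intervalIntegral.integral_congr
        intro t ht
        have : t ∈ Icc (-l) l := (uIcc_subset_Icc ⟨by linarith, hl.le⟩ ⟨h1, h2⟩) ht
        simp only [clp_mid this.1 this.2]
      rw [e1, clp_mid h1 h2]
      have := intervalIntegral.integral_eq_sub_of_hasDerivAt (a := 0) (b := x)
        (f := fun t => sin (k * t)) (f' := fun t => k * cos (k * t))
        (fun t _ => by
          have := ((hasDerivAt_id t).const_mul k).sin
          simp only [id, mul_one] at this
          rw [mul_comm]; exact this)
        ((by fun_prop : Continuous fun t => k * cos (k * t)).intervalIntegrable _ _)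
      rw [this]; simp
    intro x
    rcases le_total x l with h2 | h2
    · rcases le_total (-l) x with h1 | h1
      · exact mid x h1 h2
      · rw [← intervalIntegral.integral_add_adjacent_intervals (hii 0 (-l)) (hii (-l) x),
          mid (-l) le_rfl (by linarith), clp_lo hl.le h1, clp_lo hl.le le_rfl]
        have : ∫ t in (-l)..x, k * cos (k * clp l t) = ∫ t in (-l)..x, (0:ℝ) := by
          apply intervalIntegral.integral_congr
          intro t ht
          rw [uIcc_of_ge h1] at ht
          simp only [clp_lo hl.le ht.2, mul_neg, hkl, cos_neg, cos_pi_div_two, mul_zero]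
        rw [this]; simp
    · rw [← intervalIntegral.integral_add_adjacent_intervals (hii 0 l) (hii l x),
          mid l (by linarith) le_rfl, clp_hi hl.le h2, clp_hi hl.le le_rfl]
      have : ∫ t in l..x, k * cos (k * clp l t) = ∫ t in l..x, (0:ℝ) := by
        apply intervalIntegral.integral_congr
        intro t ht
        rw [uIcc_of_le h2] at ht
        simp only [clp_hi hl.le ht.1, hkl, cos_pi_div_two, mul_zero]
      rw [this]; simp
  rw [← key x, ← key y, intervalIntegral.integral_interval_sub_left (hii _ _) (hii _ _)]

lemma bump_int {k l : ℝ} (hk : 0 < k) (hl : 0 < l) (hkl : k * l = π / 2) (m : ℝ) :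
    (∀ x, x ∉ Ioc (m - l) (m + l) → 1 + cos (2 * k * clp l (x - m)) = 0) ∧
    ∫ x, (1 + cos (2 * k * clp l (x - m))) = 2 * l ∧
    Integrable (fun x => 1 + cos (2 * k * clp l (x - m))) := by
  have hc : Continuous fun x => 1 + cos (2 * k * clp l (x - m)) := by have := clp_cont l; fun_prop
  have hpi : 2 * k * l = π := by linarith
  have h1 : ∀ x, x ∉ Ioc (m - l) (m + l) → 1 + cos (2 * k * clp l (x - m)) = 0 := by
    intro x hx
    by_cases h : m - l < x
    · have : m + l < x := by
        by_contra h2; exact hx ⟨h, not_lt.1 h2⟩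
      rw [clp_hi hl.le (by linarith), hpi, cos_pi]; ring
    · push Not at h
      rw [clp_lo hl.le (by linarith), mul_neg, cos_neg, hpi, cos_pi]; ring
  have h2 : (fun x => 1 + cos (2 * k * clp l (x - m))) =
      (Ioc (m - l) (m + l)).indicator (fun x => 1 + cos (2 * k * clp l (x - m))) := by
    ext x
    by_cases hx : x ∈ Ioc (m - l) (m + l)
    · rw [indicator_of_mem hx]
    · rw [indicator_of_notMem hx, h1 x hx]
  refine ⟨h1, ?_, ?_⟩
  · rw [h2, integral_indicator measurableSet_Ioc, ← intervalIntegral.integral_of_le (by linarith)]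
    have e1 : ∫ x in (m - l)..(m + l), (1 + cos (2 * k * clp l (x - m))) =
        ∫ x in (m - l)..(m + l), (1 + cos (2 * k * (x - m))) := by
      apply intervalIntegral.integral_congr
      intro t ht
      rw [uIcc_of_le (by linarith)] at ht
      simp only [clp_mid (by linarith [ht.1] : -l ≤ t - m) (by linarith [ht.2])]
    rw [e1]
    have := intervalIntegral.integral_eq_sub_of_hasDerivAt (a := m - l) (b := m + l)
        (f := fun t => t + sin (2 * k * (t - m)) / (2 * k)) (f' := fun t => 1 + cos (2 * k * (t - m)))
        (fun t _ => by
          have := (hasDerivAt_id t).add ((((((hasDerivAt_id t).sub_const m).const_mul (2 * k)).sin).div_const (2 * k)))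
          refine this.congr_deriv ?_
          simp only [id]
          field_simp)
        ((by fun_prop : Continuous fun t => 1 + cos (2 * k * (t - m))).intervalIntegrable _ _)
    rw [this]
    have e2 : 2 * k * (m + l - m) = π := by linear_combination hpi
    have e3 : 2 * k * (m - l - m) = -π := by linear_combination -hpi
    rw [e2, e3, sin_neg, sin_pi]; ring
  · rw [h2, integrable_indicator_iff measurableSet_Ioc]
    exact hc.integrableOn_Icc.mono_set Ioc_subset_Icc_self

lemma one_d_c1 {M : ℝ} {h : ℝ → ℝ} (hi : Integrable h) (h0 : ∀ x, 0 ≤ h x) (hM0 : 0 < M)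
    (hM : ∀ᵐ x, h x < M) (hA : 0 < ∫ x, h x) {k l : ℝ} (hl : l = (∫ x, h x) / (2 * M)) (hk : k = π * M / (∫ x, h x)) (m : ℝ) :
    ∫ x, cos (2 * k * clp l (x - m)) * h x < 0 := by
  set A := ∫ x, h x with hAd
  have hl0 : 0 < l := by rw [hl]; positivity
  have hk0 : 0 < k := by rw [hk]; positivity
  have hkl : k * l = π / 2 := by rw [hk, hl]; field_simp
  obtain ⟨b1, b2, b3⟩ := bump_int hk0 hl0 hkl m
  have hc : Continuous fun x => cos (2 * k * clp l (x - m)) := by have := clp_cont l; fun_prop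
  have hci : Integrable (fun x => cos (2 * k * clp l (x - m)) * h x) :=
    hi.bdd_mul (c := 1) hc.aestronglyMeasurable (ae_of_all _ fun x => by
      rw [Real.norm_eq_abs]; exact abs_cos_le_one _)
  have hnn : ∀ x, 0 ≤ 1 + cos (2 * k * clp l (x - m)) := fun x => by
    linarith [neg_one_le_cos (2 * k * clp l (x - m))]
  have hlt : ∫ x, (h x + cos (2 * k * clp l (x - m)) * h x) < ∫ x, M * (1 + cos (2 * k * clp l (x - m))) := by
    apply int_lt_of_le (f := fun x => h x + cos (2 * k * clp l (x - m)) * h x) (hi.add hci) (b3.const_mul M)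
    · filter_upwards [hM] with x hx
      nlinarith [mul_le_mul_of_nonneg_right hx.le (hnn x)]
    · have hsub : volume (Ioo (m - l) (m + l)) ≤ volume {x | h x + cos (2 * k * clp l (x - m)) * h x <
          M * (1 + cos (2 * k * clp l (x - m)))} := by
        apply measure_mono_ae
        filter_upwards [hM] with x hx hxm
        have hxm' : x ∈ Ioo (m - l) (m + l) := hxm
        show h x + cos (2 * k * clp l (x - m)) * h x < M * (1 + cos (2 * k * clp l (x - m)))
        have hpos : 0 < 1 + cos (2 * k * clp l (x - m)) := by
          rw [clp_mid (by linarith [hxm'.1]) (by linarith [hxm'.2])]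
          have habs : |k * (x - m)| < π / 2 := by
            rw [← hkl, abs_mul, abs_of_pos hk0]
            exact mul_lt_mul_of_pos_left (abs_lt.2 ⟨by linarith [hxm'.1], by linarith [hxm'.2]⟩) hk0
          have hcp := cos_pos_of_mem_Ioo (abs_lt.1 habs)
          rw [show 2 * k * (x - m) = 2 * (k * (x - m)) by ring, cos_two_mul]
          have := pow_pos hcp 2
          linarith
        nlinarith [mul_lt_mul_of_pos_right hx hpos]
      intro hz
      rw [hz, Real.volume_Ioo] at hsub
      simp at hsub
      linarith
  rw [integral_add hi hci, integral_const_mul, b2] at hlt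
  have : M * (2 * l) = A := by rw [hl]; field_simp
  linarith

lemma find_m {a b : ℝ} {h : ℝ → ℝ} (hi : Integrable h) 
    (hz : ∀ x, x ∉ Ioo a b → h x = 0) (hA : 0 < ∫ x, h x) {k l : ℝ} (hk : 0 < k) (hl : 0 < l) (hkl : k * l = π / 2) :
    ∃ m, ∫ x, sin (k * clp l (x - m)) * h x = 0 := by
  have hcl := clp_cont l
  have hc : Continuous fun m => ∫ x, sin (k * clp l (x - m)) * h x := by
    refine continuous_of_dominated (bound := fun x => ‖h x‖) ?_ ?_ hi.norm ?_
    · intro m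
      exact ((by fun_prop : Continuous fun x => sin (k * clp l (x - m))).aestronglyMeasurable).mul hi.aestronglyMeasurable
    · intro m
      refine ae_of_all _ fun x => ?_
      rw [norm_mul]
      exact mul_le_of_le_one_left (norm_nonneg _) (by rw [Real.norm_eq_abs]; exact abs_sin_le_one _)
    · refine ae_of_all _ fun x => ?_
      fun_prop
  have h1 : ∫ x, sin (k * clp l (x - (a - l))) * h x = ∫ x, h x := by
    congr 1; ext x
    by_cases hx : x ∈ Ioo a b
    · rw [clp_hi hl.le (by linarith [hx.1]), hkl, sin_pi_div_two, one_mul]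
    · rw [hz x hx, mul_zero]
  have h2 : ∫ x, sin (k * clp l (x - (b + l))) * h x = -∫ x, h x := by
    rw [← integral_neg]
    congr 1; ext x
    by_cases hx : x ∈ Ioo a b
    · rw [clp_lo hl.le (by linarith [hx.2]), mul_neg, sin_neg, hkl, sin_pi_div_two]; ring
    · rw [hz x hx, mul_zero, neg_zero]
  exact mem_range_of_exists_le_of_exists_ge hc ⟨b + l, by rw [h2]; linarith⟩ ⟨a - l, by rw [h1]; linarith⟩


lemma poly_prim (P : Polynomial ℝ) (a c : ℝ) :
    ContDiff ℝ (⊤ : ℕ∞) (fun x => c + ∫ t in a..x, P.eval t) ∧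
    ∀ x, HasDerivAt (fun x => c + ∫ t in a..x, P.eval t) (P.eval x) x := by
  have hP : Continuous fun t => P.eval t := P.continuous
  have hd : ∀ x, HasDerivAt (fun x => c + ∫ t in a..x, P.eval t) (P.eval x) x := fun x =>
    (intervalIntegral.integral_hasDerivAt_right (hP.intervalIntegrable _ _)
      (hP.stronglyMeasurableAtFilter _ _) hP.continuousAt).const_add c
  refine ⟨?_, hd⟩
  rw [contDiff_infty_iff_deriv]
  refine ⟨fun x => (hd x).differentiableAt, ?_⟩
  rw [show deriv (fun x => c + ∫ t in a..x, P.eval t) = fun x => P.eval x from funext fun x => (hd x).deriv]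
  exact P.contDiff_aeval _

lemma weighted_le {a b : ℝ} {h : ℝ → ℝ} (hi : Integrable h) (h0 : ∀ x, 0 ≤ h x)
    (hz : ∀ x, x ∉ Ioo a b → h x = 0) {F G : ℝ → ℝ} (hF : Integrable fun x => F x * h x)
    (hG : Integrable fun x => G x * h x) (hle : ∀ x ∈ Ioo a b, F x ≤ G x) :
    ∫ x, F x * h x ≤ ∫ x, G x * h x := by
  refine integral_mono hF hG fun x => ?_
  by_cases hx : x ∈ Ioo a b
  · exact mul_le_mul_of_nonneg_right (hle x hx) (h0 x)
  · simp [hz x hx]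

set_option maxHeartbeats 1000000 in
lemma one_d {a b M : ℝ} {h : ℝ → ℝ} (hab : a < b) (hIntg : ∀ G : ℝ → ℝ, Continuous G → Integrable fun x => G x * h x)
    (h0 : ∀ x, 0 ≤ h x)
    (hz : ∀ x, x ∉ Ioo a b → h x = 0) (hM0 : 0 < M)
    (hM : ∀ᵐ x, h x < M) (hA : 0 < ∫ x, h x) :
    ∃ U U' : ℝ → ℝ, ContDiff ℝ (⊤ : ℕ∞) U ∧ (∀ x, HasDerivAt U (U' x) x) ∧ Continuous U' ∧
      ∫ x, U x * h x = 0 ∧ 0 < ∫ x, U x ^ 2 * h x ∧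
      ∫ x, U' x ^ 2 * h x < (π * M / ∫ x, h x) ^ 2 * ∫ x, U x ^ 2 * h x := by
  have hi : Integrable h := by simpa using hIntg (fun _ => 1) continuous_const
  set A := ∫ x, h x with hAd
  set k := π * M / A with hk
  set l := A / (2 * M) with hl
  have hl0 : 0 < l := by rw [hl]; positivity
  have hk0 : 0 < k := by rw [hk]; positivity
  have hkl : k * l = π / 2 := by rw [hk, hl]; field_simp
  have hcl := clp_cont l
  obtain ⟨m, hm⟩ := find_m hi hz hA hk0 hl0 hkl
  have hneg := one_d_c1 hi h0 hM0 hM hA hl hk m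
  set S : ℝ → ℝ := fun x => sin (k * clp l (x - m)) with hS
  set S' : ℝ → ℝ := fun x => k * cos (k * clp l (x - m)) with hS'
  have hSc : Continuous S := by simp only [hS]; fun_prop
  have hS'c : Continuous S' := by simp only [hS']; fun_prop
  have hprim : ∀ x, S x = S a + ∫ t in a..x, S' t := by
    intro x
    have h1 := clp_prim hk0 hl0 hkl (a - m) (x - m)
    rw [← intervalIntegral.integral_comp_sub_right (fun t => k * cos (k * clp l t)) m] at h1
    simp only [hS, hS']
    rw [h1]; ring
  have hid : ∀ x, S' x ^ 2 - k ^ 2 * S x ^ 2 = k ^ 2 * cos (2 * k * clp l (x - m)) := by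
    intro x
    simp only [hS, hS']
    rw [show 2 * k * clp l (x - m) = 2 * (k * clp l (x - m)) by ring, cos_two_mul']
    ring
  set γ := -∫ x, cos (2 * k * clp l (x - m)) * h x with hγ
  have hγ0 : 0 < γ := by rw [hγ]; linarith
  have hSint : (∫ x, S' x ^ 2 * h x) - k ^ 2 * ∫ x, S x ^ 2 * h x = - (k ^ 2 * γ) := by
    rw [hγ, mul_neg, neg_neg, ← integral_const_mul, ← integral_const_mul, ← integral_sub]
    · congr 1; ext x; linear_combination (h x) * hid x
    · exact hIntg (fun x => S' x ^ 2) (by fun_prop)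
    · exact (hIntg (fun x => S x ^ 2) (by fun_prop)).const_mul _
  -- choose η
  set C := 2 * (b - a) with hC
  have hC0 : 0 < C := by rw [hC]; linarith
  set Z := (2 * k + 1 + 2 * k ^ 2 * C) * A with hZ
  have hZ0 : 0 < Z := by rw [hZ]; positivity
  set η := min 1 (k ^ 2 * γ / (2 * Z)) with hη
  have hη0 : 0 < η := lt_min one_pos (by positivity)
  have hη1 : η ≤ 1 := min_le_left _ _
  have hη2 : η * Z ≤ k ^ 2 * γ / 2 := by
    have : η ≤ k ^ 2 * γ / (2 * Z) := min_le_right _ _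
    rw [le_div_iff₀ (by positivity)] at this
    linarith
  obtain ⟨P, hP⟩ := exists_polynomial_near_of_continuousOn a b S' hS'c.continuousOn η hη0
  obtain ⟨hU0s, hU0d⟩ := poly_prim P a (S a)
  set U0 : ℝ → ℝ := fun x => S a + ∫ t in a..x, P.eval t with hU0
  have hPc : Continuous fun t => P.eval t := P.continuous
  have hU0c : Continuous U0 := hU0s.continuous
  have hUS : ∀ x ∈ Ioo a b, |U0 x - S x| ≤ η * (b - a) := by
    intro x hx
    have e1 : U0 x - S x = ∫ t in a..x, (P.eval t - S' t) := by
      rw [hprim x, intervalIntegral.integral_sub (hPc.intervalIntegrable _ _) (hS'c.intervalIntegrable _ _)]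
      simp only [hU0]; ring
    rw [e1, ← Real.norm_eq_abs]
    have := intervalIntegral.norm_integral_le_of_norm_le_const (a := a) (b := x) (C := η)
      (f := fun t => P.eval t - S' t) (fun t ht => by
        rw [uIoc_of_le hx.1.le] at ht
        rw [Real.norm_eq_abs]
        exact (hP t ⟨ht.1.le, by linarith [ht.2, hx.2]⟩).le)
    refine this.trans ?_
    rw [abs_of_pos (by linarith [hx.1])]
    exact mul_le_mul_of_nonneg_left (by linarith [hx.2]) hη0.le
  set c := (∫ x, U0 x * h x) / A with hc
  have hcA : c * A = ∫ x, U0 x * h x := div_mul_cancel₀ _ hA.ne'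
  have hcst : ∀ z : ℝ, ∫ x, z * h x = z * A := fun z => integral_const_mul z h
  have hcb : |c| ≤ η * (b - a) := by
    have h1 : ∫ x, U0 x * h x = ∫ x, (U0 x - S x) * h x := by
      simp_rw [sub_mul]
      rw [integral_sub (hIntg U0 hU0c) (hIntg S hSc), hm, sub_zero]
    have h2 : ∫ x, (U0 x - S x) * h x ≤ η * (b - a) * A := by
      rw [← hcst]
      exact weighted_le hi h0 hz (hIntg _ (by fun_prop)) (hIntg _ continuous_const) fun x hx => (abs_le.1 (hUS x hx)).2
    have h3 : -(η * (b - a)) * A ≤ ∫ x, (U0 x - S x) * h x := by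
      rw [← hcst]
      exact weighted_le hi h0 hz (hIntg _ continuous_const) (hIntg _ (by fun_prop)) fun x hx => (abs_le.1 (hUS x hx)).1
    rw [abs_le]
    constructor
    · refine le_of_mul_le_mul_right ?_ hA; linarith
    · refine le_of_mul_le_mul_right ?_ hA; linarith
  set U : ℝ → ℝ := fun x => U0 x - c with hU
  have hUc : Continuous U := by simp only [hU]; fun_prop
  have hUSb : ∀ x ∈ Ioo a b, |U x - S x| ≤ C * η := by
    intro x hx
    have h1 := abs_le.1 (hUS x hx)
    have h2 := abs_le.1 hcb
    rw [abs_le, hC]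
    simp only [hU]
    constructor <;> linarith [h1.1, h1.2, h2.1, h2.2]
  have hS1 : ∀ x, |S x| ≤ 1 := fun x => abs_sin_le_one _
  have hS'1 : ∀ x, |S' x| ≤ k := fun x => by
    simp only [hS']; rw [abs_mul, abs_of_pos hk0]
    exact mul_le_of_le_one_right hk0.le (abs_cos_le_one _)
  have I1 : ∫ x, P.eval x ^ 2 * h x ≤ (∫ x, S' x ^ 2 * h x) + (2 * k * η + η ^ 2) * A := by
    rw [← hcst, ← integral_add (hIntg (fun x => S' x ^ 2) (by fun_prop)) (hIntg _ continuous_const)]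
    simp_rw [← add_mul]
    refine weighted_le hi h0 hz (hIntg _ (by fun_prop)) (hIntg _ (by fun_prop)) fun x hx => ?_
    have h1 := (hP x ⟨hx.1.le, hx.2.le⟩).le
    have h2 : |S' x| * |P.eval x - S' x| ≤ k * η := mul_le_mul (hS'1 x) h1 (abs_nonneg _) hk0.le
    rw [← abs_mul] at h2
    have h3 := (abs_le.1 h2).2
    have h4 : (P.eval x - S' x) ^ 2 ≤ η ^ 2 := by
      rw [← sq_abs]; exact pow_le_pow_left₀ (abs_nonneg _) h1 2
    linarith [show P.eval x ^ 2 = S' x ^ 2 + 2 * (S' x * (P.eval x - S' x)) + (P.eval x - S' x) ^ 2 by ring]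
  have I2 : (∫ x, S x ^ 2 * h x) - 2 * (C * η) * A ≤ ∫ x, U x ^ 2 * h x := by
    rw [← hcst, ← integral_sub (hIntg (fun x => S x ^ 2) (by fun_prop)) (hIntg _ continuous_const)]
    simp_rw [← sub_mul]
    refine weighted_le hi h0 hz (hIntg _ (by fun_prop)) (hIntg _ (by fun_prop)) fun x hx => ?_
    have h1 := hUSb x hx
    have h2 : |S x| * |U x - S x| ≤ 1 * (C * η) := mul_le_mul (hS1 x) h1 (abs_nonneg _) one_pos.le
    rw [← abs_mul] at h2
    have h3 := (abs_le.1 h2).1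
    have h4 := sq_nonneg (U x - S x)
    linarith [show U x ^ 2 = S x ^ 2 + 2 * (S x * (U x - S x)) + (U x - S x) ^ 2 by ring]
  have hk2 : 0 < k ^ 2 := by positivity
  have hfin : ∫ x, P.eval x ^ 2 * h x < k ^ 2 * ∫ x, U x ^ 2 * h x := by
    have h1 := mul_le_mul_of_nonneg_left I2 hk2.le
    have h2 : η ^ 2 * A ≤ η * A := mul_le_mul_of_nonneg_right (by nlinarith) hA.le
    have h3 : 0 < k ^ 2 * γ := mul_pos hk2 hγ0
    have h4 : η * Z = 2 * k * η * A + η * A + k ^ 2 * (2 * (C * η) * A) := by rw [hZ]; ring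
    linarith
  refine ⟨U, fun x => P.eval x, hU0s.sub contDiff_const, fun x => (hU0d x).sub_const c, hPc, ?_, ?_, hfin⟩
  · simp only [hU]
    simp_rw [sub_mul]
    rw [integral_sub (hIntg U0 hU0c) (hIntg _ continuous_const), hcst, hcA, sub_self]
  · have h1 : 0 ≤ ∫ x, P.eval x ^ 2 * h x := integral_nonneg fun x => mul_nonneg (sq_nonneg _) (h0 x)
    have h2 : 0 < k ^ 2 * ∫ x, U x ^ 2 * h x := lt_of_le_of_lt h1 hfin
    exact (mul_pos_iff_of_pos_left hk2).1 h2


lemma slice_short {Ω : Set E2} {p : E2} {r : ℝ} {w : Fin 3 → ℝ}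
    {e : Fin 3 → E2} (hr : 0 < r) (he : ∀ i, ‖e i‖ = 1) (hs : ∀ i, ∀ x ∈ Ω, ⟪x - p, e i⟫ < r)
    (hw : ∀ i, 0 ≤ w i) (hws : ∑ i, w i = 1) (hw0 : ∑ i, w i • e i = 0) :
    ∃ i, ∀ᵐ s, slh Ω p (e i) s < 3 * r := by
  by_cases hbig : ∃ i, 1 / 3 < w i
  · obtain ⟨i, hi⟩ := hbig
    refine ⟨i, ae_of_all _ fun s => ?_⟩
    have hwi : 0 < w i := by linarith
    have hw1 : w i ≤ 1 := by
      rw [← hws]; exact Finset.single_le_sum (fun j _ => hw j) (Finset.mem_univ i)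
    have hsub : slc Ω p (e i) s ⊆ Icc (-(r * (1 - w i) / w i)) r := by
      intro y hy
      have h1 := strip_width hw hws hw0 (fun j => hs j _ hy) i
      have h2 := hs i _ hy
      rw [add_sub_cancel_left, inner_Phi_e (he i)] at h1 h2
      refine ⟨?_, h2.le⟩
      rw [neg_le, div_eq_mul_inv, ← div_eq_mul_inv, le_div_iff₀ hwi]
      simp only at h1
      linarith
    have hnn : 0 ≤ r * (1 - w i) / w i := div_nonneg (mul_nonneg hr.le (by linarith)) hwi.le
    have h3 := slh_le (by linarith) hsub
    have h4 : r * (1 - w i) / w i < 2 * r := by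
      rw [div_lt_iff₀ hwi]; nlinarith
    linarith
  · push Not at hbig
    have hws' := hws
    rw [Fin.sum_univ_three] at hws'
    have w0 : w 0 = 1 / 3 := by linarith [hbig 0, hbig 1, hbig 2]
    have w1 : w 1 = 1 / 3 := by linarith [hbig 0, hbig 1, hbig 2]
    have w2 : w 2 = 1 / 3 := by linarith [hbig 0, hbig 1, hbig 2]
    rw [Fin.sum_univ_three, w0, w1, w2, ← smul_add, ← smul_add] at hw0
    have hsum : e 0 + e 1 + e 2 = 0 := by
      rcases smul_eq_zero.1 hw0 with h | h
      · norm_num at h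
      · exact h
    have he2 : e 2 = -(e 0) - e 1 := by
      rw [← sub_eq_zero, ← hsum]; abel
    have n0 := he 0
    have n1 := he 1
    have hin : ⟪e 0, e 1⟫ = -(1/2) := by
      have h1 := real_inner_self_eq_norm_sq (e 2)
      rw [he 2, he2] at h1
      simp only [inner_sub_left, inner_sub_right, inner_neg_left, inner_neg_right,
        real_inner_self_eq_norm_sq, n0, n1, real_inner_comm (e 0) (e 1)] at h1
      have h2 := real_inner_comm (e 0) (e 1)
      linarith
    set κ := ⟪rot (e 0), e 1⟫ with hκ
    have hκ2 : κ ^ 2 = 3 / 4 := by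
      have h1 := normsq_coord n0 (e 1)
      rw [n1, real_inner_comm, real_inner_comm (e 0) (e 1), ← hκ] at h1
      have h2 := real_inner_comm (e 0) (e 1)
      rw [hin] at *
      nlinarith
    have hκ0 : 0 < |κ| := abs_pos.2 (by intro h; rw [h] at hκ2; norm_num at hκ2)
    refine ⟨0, ?_⟩
    have hne : ∀ᵐ s : ℝ, s ≠ 0 := by
      rw [ae_iff]; simp
    filter_upwards [hne] with s hs0
    have hk : 0 < |κ| * |s| := mul_pos hκ0 (abs_pos.2 hs0)
    by_cases hem : (slc Ω p (e 0) s).Nonempty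
    · have hsub : slc Ω p (e 0) s ⊆ Icc (-2 * r + 2 * (|κ| * |s|)) r := by
        intro y hy
        have a0 := hs 0 _ hy
        have a1 := hs 1 _ hy
        have a2 := hs 2 _ hy
        rw [add_sub_cancel_left, inner_Phi_e n0] at a0
        have b1 : ⟪Phi (e 0) (s, y), e 1⟫ = s * κ - y / 2 := by
          simp only [Phi, inner_add_left, inner_smul_left, conj_trivial, hin, ← hκ]; ring
        have b2 : ⟪Phi (e 0) (s, y), e 2⟫ = -(s * κ) - y / 2 := by
          rw [he2, inner_sub_right, inner_neg_right, b1, inner_Phi_e n0]; ring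
        rw [add_sub_cancel_left, b1] at a1
        rw [add_sub_cancel_left, b2] at a2
        refine ⟨?_, a0.le⟩
        have : |s * κ| ≤ r + y / 2 := abs_le.2 ⟨by linarith, by linarith⟩
        rw [abs_mul] at this
        linarith
      obtain ⟨y, hy⟩ := hem
      have hcd := hsub hy
      have h3 := slh_le (hcd.1.trans hcd.2) hsub
      linarith
    · have hnp : s ∉ prj Ω p (e 0) := by
        rintro ⟨y, hy⟩
        exact hem ⟨y, hy⟩
      rw [slh_zero hnp]
      linarith

lemma nEig_bdd (Ω : Set E2) : BddBelow { R : ℝ | ∃ u : E2 → ℝ, ContDiff ℝ (⊤ : ℕ∞) u ∧ (∫ x in Ω, u x) = 0 ∧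
    (∫ x in Ω, (u x)^2) ≠ 0 ∧
    R = (∫ x in Ω, ‖fderiv ℝ u x‖^2) / (∫ x in Ω, (u x)^2) } := by
  refine ⟨0, ?_⟩
  rintro R ⟨u, -, -, -, rfl⟩
  exact div_nonneg (integral_nonneg fun _ => sq_nonneg _) (integral_nonneg fun _ => sq_nonneg _)

/-- Existence of a good one-dimensional test function. -/
lemma nEig_test {Ω : Set E2} (hne : Ω.Nonempty) (ho : IsOpen Ω) (hb : Bornology.IsBounded Ω)
    (hc : Convex ℝ Ω) {p : E2} {r : ℝ} {w : Fin 3 → ℝ}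
    {e : Fin 3 → E2} (hr : 0 < r) (he : ∀ i, ‖e i‖ = 1) (hs : ∀ i, ∀ x ∈ Ω, ⟪x - p, e i⟫ < r)
    (hw : ∀ i, 0 ≤ w i) (hws : ∑ i, w i = 1) (hw0 : ∑ i, w i • e i = 0) :
    ∃ R, (∃ u : E2 → ℝ, ContDiff ℝ (⊤ : ℕ∞) u ∧ (∫ x in Ω, u x) = 0 ∧
    (∫ x in Ω, (u x)^2) ≠ 0 ∧
    R = (∫ x in Ω, ‖fderiv ℝ u x‖^2) / (∫ x in Ω, (u x)^2)) ∧ (volume Ω).toReal ^ 2 * R < 9 * π ^ 2 * r ^ 2 := by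
  obtain ⟨i, hi⟩ := slice_short hr he hs hw hws hw0
  have hei := he i
  obtain ⟨a, b, hab, hp⟩ := prj_interval hne ho hc hb p hei
  have hv := slice_vol ho hb p hei
  have hA : 0 < (volume Ω).toReal :=
    ENNReal.toReal_pos (ho.measure_pos _ hne).ne' hb.measure_lt_top.ne
  obtain ⟨U, U', hUs, hUd, hU'c, hU1, hU2, hU3⟩ := one_d (M := 3 * r) hab
    (fun G hG => slh_integrable hne ho hc hb p hei hG) (slh_nonneg Ω p (e i))
    (fun x hx => slh_zero (by rwa [hp])) (by linarith) hi (by rw [← hv]; exact hA)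
  rw [← hv] at hU3
  have hUc := hUs.continuous
  have f1 := slice_fubini ho hb p hei (G := U) hUc
  have f2 := slice_fubini ho hb p hei (G := fun s => U s ^ 2) (by fun_prop)
  have f3 := slice_fubini ho hb p hei (G := fun s => U' s ^ 2) (by fun_prop)
  set u : E2 → ℝ := fun x => U ⟪x - p, rot (e i)⟫ with hu
  have hus : ContDiff ℝ (⊤ : ℕ∞) u :=
    hUs.comp ((contDiff_id.sub contDiff_const).inner ℝ contDiff_const)
  have hfd : ∀ x, ‖fderiv ℝ u x‖ ^ 2 = U' ⟪x - p, rot (e i)⟫ ^ 2 := by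
    intro x
    have h1 : HasFDerivAt (fun x : E2 => ⟪x - p, rot (e i)⟫) (innerSL ℝ (rot (e i))) x := by
      have h2 : HasFDerivAt (fun x : E2 => innerSL ℝ (rot (e i)) (x - p)) (innerSL ℝ (rot (e i))) x :=
        (innerSL ℝ (rot (e i))).hasFDerivAt.comp x ((hasFDerivAt_id x).sub_const p)
      refine h2.congr_of_eventuallyEq (Eventually.of_forall fun y => ?_)
      simp only [innerSL_apply_apply]
      rw [real_inner_comm]
    have h3 := (hUd ⟪x - p, rot (e i)⟫).comp_hasFDerivAt x h1
    rw [show fderiv ℝ u x = _ from h3.fderiv, norm_smul, innerSL_apply_norm, norm_rot, hei, mul_one,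
      Real.norm_eq_abs, sq_abs]
  refine ⟨_, ⟨u, hus, by rw [f1, hU1], by rw [f2]; exact hU2.ne', rfl⟩, ?_⟩
  simp_rw [hfd]
  rw [f2, f3, mul_div_assoc', div_lt_iff₀ hU2]
  have hA2 : 0 < (volume Ω).toReal ^ 2 := by positivity
  have h5 := mul_lt_mul_of_pos_left hU3 hA2
  refine h5.trans_eq ?_
  field_simp
  ring

theorem F_two_sided_bound (Ω : Set E2) (hne : Ω.Nonempty) (hopen : IsOpen Ω)
    (hbd : Bornology.IsBounded Ω) (hconv : Convex ℝ Ω) :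
    π^4 / 4 < (volume Ω).toReal^2 * dEig1 Ω * nEig1 Ω ∧
      (volume Ω).toReal^2 * dEig1 Ω * nEig1 Ω < 9 * π^2 * dEig1 unitDisc := by
  obtain ⟨p, r, w, e, hr, hball, he, hs, hw, hws, hw0⟩ := incircle3 hne hopen hbd hconv
  obtain ⟨D, hD, hDd, harea⟩ := area_lb hne hopen hbd hconv hr hball
  have hlam := dEig_lower hne hopen hr he hs hw hws hw0
  have hup := dEig_upper hr hball
  obtain ⟨R, hR, hRlt⟩ := nEig_test hne hopen hbd hconv hr he hs hw hws hw0
  change r * D < (volume Ω).toReal at harea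
  set A := (volume Ω).toReal with hA
  have hA0 : 0 < A := lt_trans (by positivity) harea
  have hpi := pi_pos
  have hmuR : nEig1 Ω ≤ R := csInf_le (nEig_bdd Ω) hR
  have hmu : (π / D) ^ 2 ≤ nEig1 Ω := by
    refine le_csInf ⟨R, hR⟩ ?_
    rintro R' ⟨u, hu, hu1, hu2, rfl⟩
    have h1 := payne_weinberger hne hopen hbd hconv hD hDd (hu.of_le (by exact_mod_cast le_top)) hu1
    have h2 : 0 < ∫ x in Ω, u x ^ 2 := lt_of_le_of_ne (integral_nonneg fun _ => sq_nonneg _) hu2.symm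
    rwa [le_div_iff₀ h2]
  set lam := dEig1 Ω
  set mu := nEig1 Ω
  have hl0 : 0 < π ^ 2 / (4 * r ^ 2) := by positivity
  have hlam0 : 0 < lam := lt_of_lt_of_le hl0 hlam
  have hm0 : 0 < (π / D) ^ 2 := by positivity
  have hmu0 : 0 < mu := lt_of_lt_of_le hm0 hmu
  constructor
  · have h1 : π ^ 2 / (4 * r ^ 2) * (π / D) ^ 2 ≤ lam * mu := mul_le_mul hlam hmu hm0.le hlam0.le
    have h2 : (r * D) ^ 2 < A ^ 2 := pow_lt_pow_left₀ harea (by positivity) two_ne_zero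
    calc π ^ 4 / 4 = (r * D) ^ 2 * (π ^ 2 / (4 * r ^ 2) * (π / D) ^ 2) := by field_simp
      _ < A ^ 2 * (π ^ 2 / (4 * r ^ 2) * (π / D) ^ 2) := mul_lt_mul_of_pos_right h2 (by positivity)
      _ ≤ A ^ 2 * (lam * mu) := mul_le_mul_of_nonneg_left h1 (by positivity)
      _ = A ^ 2 * lam * mu := by ring
  · have h1 : A ^ 2 * mu < 9 * π ^ 2 * r ^ 2 :=
      lt_of_le_of_lt (mul_le_mul_of_nonneg_left hmuR (by positivity)) hRlt
    calc A ^ 2 * lam * mu = (A ^ 2 * mu) * lam := by ring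
      _ < (9 * π ^ 2 * r ^ 2) * lam := mul_lt_mul_of_pos_right h1 hlam0
      _ = 9 * π ^ 2 * (r ^ 2 * lam) := by ring
      _ ≤ 9 * π ^ 2 * dEig1 unitDisc := mul_le_mul_of_nonneg_left hup (by positivity)
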